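/- Let (ρ, u) be a weak solution of the stationary isentropic Navier–Stokes system on ℝ³ with exponent γ ≥ 6 and potential G ∈ D₀^{1, 6γ/(5γ−6)}(ℝ³). If the total energy is finite, i.e. ∫_{ℝ³} ( (1/2) ρ|u|² + ρ^γ/(γ−1) ) dx < ∞, then u = 0 almost everywhere. -/

import Mathlib

noncomputable section

open MeasureTheory Metric Filter Topology Set

/-- Three-dimensional Euclidean space. -/
abbrev E3 : Type := EuclideanSpace ℝ (Fin 3)

/-- Partial derivative of a scalar function in the `i`-th coordinate direction. -/
def pd (f : E3 → ℝ) (i : Fin 3) : E3 → ℝ :=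
  fun x => fderiv ℝ f x (EuclideanSpace.single i 1)

/-- Classical gradient matrix of a vector field: `(tgrad φ x) i j = ∂_j φ_i (x)`. -/
def tgrad (φ : E3 → Fin 3 → ℝ) (x : E3) : Fin 3 → Fin 3 → ℝ :=
  fun i j => pd (fun y => φ y i) j x

/-- Smooth compactly supported scalar test function with support in `Ω`. -/
def IsTest (Ω : Set E3) (φ : E3 → ℝ) : Prop :=
  ContDiff ℝ ((⊤ : ℕ∞) : WithTop ℕ∞) φ ∧ HasCompactSupport φ ∧ tsupport φ ⊆ Ω

/-- `C^n` compactly supported vector-valued test function with support in `Ω`. -/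
def IsTestVec (n : WithTop ℕ∞) (Ω : Set E3) (φ : E3 → Fin 3 → ℝ) : Prop :=
  ContDiff ℝ n φ ∧ HasCompactSupport φ ∧ tsupport φ ⊆ Ω

/-- The Newtonian viscous stress tensor
`S(M) = μ (M + Mᵗ - (2/3) (tr M) I) + η (tr M) I`. -/
def Smat (μ η : ℝ) (M : Fin 3 → Fin 3 → ℝ) : Fin 3 → Fin 3 → ℝ :=
  fun i j =>
    μ * (M i j + M j i - (2 / 3) * (∑ k, M k k) * (if i = j then (1 : ℝ) else 0))
      + η * (∑ k, M k k) * (if i = j then (1 : ℝ) else 0)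

/-- `dG` is the weak gradient of the scalar function `G` on `Ω`. -/
def HasWeakGradOn (Ω : Set E3) (G : E3 → ℝ) (dG : E3 → Fin 3 → ℝ) : Prop :=
  ∀ φ : E3 → ℝ, IsTest Ω φ → ∀ i : Fin 3,
    ∫ x in Ω, G x * pd φ i x = - ∫ x in Ω, dG x i * φ x

/-- `du` is the weak gradient (Jacobian) of the vector field `u` on `Ω`. -/
def HasWeakGradVecOn (Ω : Set E3) (u : E3 → Fin 3 → ℝ) (du : E3 → Fin 3 → Fin 3 → ℝ) : Prop :=
  ∀ φ : E3 → ℝ, IsTest Ω φ → ∀ i j : Fin 3,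
    ∫ x in Ω, u x i * pd φ j x = - ∫ x in Ω, du x i j * φ x

/-- `u ∈ D₀^{1,2}(Ω; ℝ³)` with weak gradient `du`: `u` is locally integrable on `Ω`, its weak
gradient belongs to `L²(Ω)`, and `u` can be approximated by smooth compactly supported fields
`uₙ` with `∇uₙ → ∇u` in `L²(Ω)` and `uₙ → u` in `L⁶(Ω)`. -/
def MemD012 (Ω : Set E3) (u : E3 → Fin 3 → ℝ) (du : E3 → Fin 3 → Fin 3 → ℝ) : Prop :=
  LocallyIntegrableOn u Ω volume ∧
  HasWeakGradVecOn Ω u du ∧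
  MemLp du 2 (volume.restrict Ω) ∧
  ∃ un : ℕ → E3 → Fin 3 → ℝ,
    (∀ n, IsTestVec ((⊤ : ℕ∞) : WithTop ℕ∞) Ω (un n)) ∧
    Tendsto (fun n => eLpNorm (fun x => tgrad (un n) x - du x) 2 (volume.restrict Ω))
      atTop (𝓝 0) ∧
    Tendsto (fun n => eLpNorm (fun x => un n x - u x) 6 (volume.restrict Ω)) atTop (𝓝 0)

/-- `G ∈ D₀^{1,q}(Ω)` with weak gradient `dG`. -/
def MemD01q (Ω : Set E3) (G : E3 → ℝ) (dG : E3 → Fin 3 → ℝ) (q : ℝ) : Prop :=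
  HasWeakGradOn Ω G dG ∧
  MemLp dG (ENNReal.ofReal q) (volume.restrict Ω) ∧
  ∃ Gn : ℕ → E3 → ℝ,
    (∀ n, IsTest Ω (Gn n)) ∧
    Tendsto (fun n =>
        eLpNorm (fun x => (fun i => pd (Gn n) i x) - dG x) (ENNReal.ofReal q)
          (volume.restrict Ω)) atTop (𝓝 0) ∧
    ∀ K : Set E3, IsCompact K → K ⊆ Ω →
      Tendsto (fun n => ∫ x in K, |Gn n x - G x|) atTop (𝓝 0)

/-- `G ∈ W^{1,∞}(Ω)` with weak gradient `dG`: both `G` and `∇G` are essentially bounded. -/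
def MemW1inf (Ω : Set E3) (G : E3 → ℝ) (dG : E3 → Fin 3 → ℝ) : Prop :=
  HasWeakGradOn Ω G dG ∧
  MemLp G ⊤ (volume.restrict Ω) ∧ MemLp dG ⊤ (volume.restrict Ω)

/-- Weak solution `(ρ, u)` (with weak gradient `du` of `u` and weak gradient `dG` of `G`) of the
stationary barotropic Navier–Stokes system
`div(ρu) = 0`, `div(ρ u⊗u) + ∇p(ρ) − div S(∇u) = ρ∇G` on `Ω` with no-slip boundary condition. -/
structure WeakSolution (Ω : Set E3) (μ η : ℝ) (p : ℝ → ℝ)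
    (G : E3 → ℝ) (dG : E3 → Fin 3 → ℝ)
    (ρ : E3 → ℝ) (u : E3 → Fin 3 → ℝ) (du : E3 → Fin 3 → Fin 3 → ℝ) : Prop where
  aemeas_ρ : AEMeasurable ρ volume
  aemeas_u : AEMeasurable u volume
  weakGrad_G : HasWeakGradOn Ω G dG
  ρ_nonneg : ∀ᵐ x ∂(volume.restrict Ω), 0 ≤ ρ x
  ρu_locInt : LocallyIntegrableOn (fun x => fun i => ρ x * u x i) (closure Ω) volume
  mass : ∀ φ : E3 → ℝ, ContDiff ℝ ((⊤ : ℕ∞) : WithTop ℕ∞) φ → HasCompactSupport φ →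
    ∫ x in Ω, ρ x * (∑ i, u x i * pd φ i x) = 0
  ρ_locInt : LocallyIntegrableOn ρ Ω volume
  ρu2_locInt : LocallyIntegrableOn (fun x => ρ x * (∑ i, (u x i) ^ 2)) Ω volume
  pρ_locInt : LocallyIntegrableOn (fun x => p (ρ x)) Ω volume
  ρdG_locInt : LocallyIntegrableOn (fun x => fun i => ρ x * dG x i) Ω volume
  u_D012 : MemD012 Ω u du
  momentum : ∀ φ : E3 → Fin 3 → ℝ, IsTestVec 1 Ω φ →
    ∫ x in Ω, ((∑ i, ∑ j, ρ x * u x i * u x j * tgrad φ x i j)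
        + p (ρ x) * (∑ i, tgrad φ x i i))
      = (∫ x in Ω, ∑ i, ∑ j, Smat μ η (du x) i j * tgrad φ x i j)
        - ∫ x in Ω, ∑ i, ρ x * dG x i * φ x i

/-- Weak solution of the stationary isentropic Navier–Stokes system on `ℝ³`
with pressure `p(ρ) = ρ^γ`. -/
def IsentropicWeakSolution (μ η γ : ℝ) (G : E3 → ℝ) (dG : E3 → Fin 3 → ℝ)
    (ρ : E3 → ℝ) (u : E3 → Fin 3 → ℝ) (du : E3 → Fin 3 → Fin 3 → ℝ) : Prop :=
  WeakSolution univ μ η (fun s => s ^ γ) G dG ρ u du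

/-- The `L^r` norm of a scalar function on a set. -/
def lpNormOn (f : E3 → ℝ) (r : ℝ) (s : Set E3) : ℝ :=
  (∫ x in s, |f x| ^ r) ^ (1 / r)

/-- Euclidean norm of a vector in `ℝ³` (represented as `Fin 3 → ℝ`). -/
def vnorm (v : Fin 3 → ℝ) : ℝ := Real.sqrt (∑ i, (v i) ^ 2)

/-- The `L^r` norm of a vector field on a set. -/
def vecLpNormOn (u : E3 → Fin 3 → ℝ) (r : ℝ) (s : Set E3) : ℝ :=
  (∫ x in s, (vnorm (u x)) ^ r) ^ (1 / r)

/-- The exponent `f(α, γ)` from the higher-integrability propositions. -/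
def fExp (α γ : ℝ) : ℝ :=
  if 6 ≤ γ then
    (if (2 * γ - 3) / (γ * (γ - 1)) ≤ α then α - 3 / (2 * γ)
     else α / γ + 1 / (2 * γ) - 3 / γ ^ 2)
  else
    (if 3 / (2 * (γ - 1)) ≤ α then α - 3 / (2 * γ)
     else if 1 / (2 * (γ - 1)) ≤ α then α / γ
     else α / γ ^ 2 + 1 / (2 * γ ^ 2))

/-- The exponent `g(α, β, γ)`. -/
def gExp (α β γ : ℝ) : ℝ :=
  if fExp α γ ≤ (γ - 3) / (γ * (3 * γ - 5)) then
    γ * (1 - fExp α γ) * (6 - β) / (3 * β * (γ - 1))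
  else (1 - γ * fExp α γ) * (6 - β) / (2 * β)

open scoped ENNReal NNReal ContDiff Convolution

/-!
Since `γ ≥ 6`, finite energy and `u ∈ L⁶` put `ρ u ⊗ u` in `L²`. Testing the momentum equation with
`∇ψ` and using `‖∂ᵢ∂ⱼψ‖₂ ≤ ‖Δψ‖₂` then bounds `ψ ↦ ∫ ρ^γ Δψ` by `‖Δψ‖₂`, so the pressure `ρ^γ` lies
in `L²` and the momentum equation may be tested with `u` itself. Convection does no work because
`div (ρu) = 0`, the force does none because `∇G` is a limit of gradients of test functions, and the
pressure does none by the renormalised continuity equation `div (ρ^γ u) + (γ - 1) ρ^γ div u = 0`,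
which follows from Friedrichs' commutator lemma. Hence the viscous dissipation vanishes; it controls
`‖∇u‖₂`, and the Sobolev inequality gives `u = 0`.
-/

/-! ### Test functions on `ℝ³` -/

section PartialDerivative

variable {f g : E3 → ℝ} {x : E3}

lemma pd_mul (hf : DifferentiableAt ℝ f x) (hg : DifferentiableAt ℝ g x) (i : Fin 3) :
    pd (fun y => f y * g y) i x = pd f i x * g x + f x * pd g i x := by
  simp only [pd, fderiv_fun_mul hf hg, add_apply, smul_apply, smul_eq_mul]
  ring

lemma pd_add (hf : DifferentiableAt ℝ f x) (hg : DifferentiableAt ℝ g x) (i : Fin 3) :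
    pd (fun y => f y + g y) i x = pd f i x + pd g i x := by
  simp [pd, fderiv_fun_add hf hg]

lemma pd_const_mul (hf : DifferentiableAt ℝ f x) (c : ℝ) (i : Fin 3) :
    pd (fun y => c * f y) i x = c * pd f i x := by
  simp [pd, fderiv_const_mul hf]

lemma pd_comp_smul (hf : Differentiable ℝ f) (c : ℝ) (i : Fin 3) (x : E3) :
    pd (fun y => f (c • y)) i x = c * pd f i (c • x) := by
  have hcomp : HasFDerivAt (fun y : E3 => f (c • y))
      ((fderiv ℝ f (c • x)).comp (c • ContinuousLinearMap.id ℝ E3)) x :=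
    (hf (c • x)).hasFDerivAt.comp x ((hasFDerivAt_id x).const_smul c)
  simp [pd, hcomp.fderiv]

lemma pd_comp_const_sub (hf : Differentiable ℝ f) (x y : E3) (i : Fin 3) :
    pd (fun z => f (x - z)) i y = -pd f i (x - y) := by
  have hcomp : HasFDerivAt (fun z : E3 => f (x - z))
      ((fderiv ℝ f (x - y)).comp (-ContinuousLinearMap.id ℝ E3)) y :=
    (hf (x - y)).hasFDerivAt.comp y ((hasFDerivAt_id y).const_sub x)
  simp [pd, hcomp.fderiv]

lemma pd_rpow {b : E3 → ℝ} {r : ℝ} (hr : 1 ≤ r) (hb : DifferentiableAt ℝ b x) (i : Fin 3) :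
    pd (fun y => b y ^ r) i x = r * b x ^ (r - 1) * pd b i x := by
  simp [pd, (hb.hasFDerivAt.rpow_const (Or.inr hr)).fderiv]

lemma contDiff_pd (hf : ContDiff ℝ ∞ f) (i : Fin 3) : ContDiff ℝ ∞ (pd f i) :=
  (hf.fderiv_right (m := ∞) le_rfl).clm_apply contDiff_const

lemma continuous_pd (hf : ContDiff ℝ 1 f) (i : Fin 3) : Continuous (pd f i) :=
  (hf.continuous_fderiv one_ne_zero).clm_apply continuous_const

lemma hasCompactSupport_pd (hf : HasCompactSupport f) (i : Fin 3) :
    HasCompactSupport (pd f i) := hf.fderiv_apply (𝕜 := ℝ) _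

lemma pd_comm (hf : ContDiff ℝ ∞ f) (i j : Fin 3) : pd (pd f i) j = pd (pd f j) i := by
  ext x
  have hsymm : IsSymmSndFDerivAt ℝ f x :=
    hf.contDiffAt.isSymmSndFDerivAt (by
      rw [minSmoothness_of_isRCLikeNormedField]; exact WithTop.coe_le_coe.2 le_top)
  have hdiff : DifferentiableAt ℝ (fderiv ℝ f) x :=
    (hf.fderiv_right (m := ∞) le_rfl).differentiable (by simp) x
  have hsnd (a b : Fin 3) : pd (pd f a) b x
      = fderiv ℝ (fderiv ℝ f) x (EuclideanSpace.single b 1) (EuclideanSpace.single a 1) := by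
    unfold pd
    rw [fderiv_clm_apply hdiff (differentiableAt_const _)]
    simp
  rw [hsnd, hsnd]
  exact hsymm.eq _ _

lemma fderiv_apply_eq_sum_pd (f : E3 → ℝ) (x v : E3) :
    fderiv ℝ f x v = ∑ i, v i * pd f i x := by
  have hv : v = ∑ i, v i • EuclideanSpace.single i (1 : ℝ) := by
    ext j
    simp [Pi.single_apply]
  conv_lhs => rw [hv]
  simp [pd]

lemma norm_fderiv_le_sum_abs_pd (f : E3 → ℝ) (x : E3) : ‖fderiv ℝ f x‖ ≤ ∑ i, |pd f i x| := by
  refine ContinuousLinearMap.opNorm_le_bound _ (Finset.sum_nonneg fun i _ => abs_nonneg _)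
    fun v => ?_
  rw [fderiv_apply_eq_sum_pd, Finset.sum_mul]
  refine (norm_sum_le _ _).trans (Finset.sum_le_sum fun i _ => ?_)
  rw [norm_mul, mul_comm]
  exact mul_le_mul_of_nonneg_left (PiLp.norm_apply_le v i) (norm_nonneg _)

lemma integral_mul_pd_eq_neg (hf : ContDiff ℝ 1 f) (hg : ContDiff ℝ 1 g)
    (hc : HasCompactSupport g) (i : Fin 3) :
    ∫ x, f x * pd g i x = -∫ x, pd f i x * g x :=
  integral_mul_fderiv_eq_neg_fderiv_mul_of_integrable
    (((continuous_pd hf i).mul hg.continuous).integrable_of_hasCompactSupport hc.mul_left)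
    ((hf.continuous.mul (continuous_pd hg i)).integrable_of_hasCompactSupport
      (hasCompactSupport_pd hc i).mul_left)
    ((hf.continuous.mul hg.continuous).integrable_of_hasCompactSupport hc.mul_left)
    (fun x _ => hf.differentiable one_ne_zero x) (fun x _ => hg.differentiable one_ne_zero x)

end PartialDerivative

/-- The Laplacian of a scalar function on `ℝ³`, as the trace of its second partial derivatives. -/
def lap (f : E3 → ℝ) : E3 → ℝ := fun x => ∑ i, pd (pd f i) i x

lemma lap_comp_smul {f : E3 → ℝ} (hf : ContDiff ℝ ∞ f) (c : ℝ) (x : E3) :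
    lap (fun y => f (c • y)) x = c * c * lap f (c • x) := by
  have hpd (i : Fin 3) : pd (fun y => f (c • y)) i = fun y => c * pd f i (c • y) :=
    funext fun y => pd_comp_smul (hf.differentiable (by simp)) c i y
  have hdiff (i : Fin 3) : Differentiable ℝ (pd f i) :=
    (contDiff_pd hf i).differentiable (by simp)
  simp only [lap, hpd, Finset.mul_sum]
  refine Finset.sum_congr rfl fun i _ => ?_
  rw [pd_const_mul (f := fun y => pd f i (c • y))
    ((hdiff i _).comp x (differentiableAt_id.const_smul c)), pd_comp_smul (hdiff i), mul_assoc]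

namespace IsTest

variable {Ω : Set E3} {f g : E3 → ℝ}

lemma contDiff (hf : IsTest Ω f) : ContDiff ℝ ∞ f := hf.1

lemma contDiff_one (hf : IsTest Ω f) : ContDiff ℝ 1 f := hf.1.of_le (by simp)

lemma hasCompactSupport (hf : IsTest Ω f) : HasCompactSupport f := hf.2.1

lemma continuous (hf : IsTest Ω f) : Continuous f := hf.1.continuous

lemma differentiable (hf : IsTest Ω f) : Differentiable ℝ f := hf.1.differentiable (by simp)

lemma memLp (hf : IsTest Ω f) (p : ℝ≥0∞) : MemLp f p volume :=
  hf.continuous.memLp_of_hasCompactSupport hf.hasCompactSupport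

lemma integrable (hf : IsTest Ω f) : Integrable f volume :=
  hf.continuous.integrable_of_hasCompactSupport hf.hasCompactSupport

lemma exists_abs_le (hf : IsTest Ω f) : ∃ C, ∀ x, |f x| ≤ C :=
  hf.continuous.bounded_above_of_compact_support hf.hasCompactSupport

lemma pd (hf : IsTest Ω f) (i : Fin 3) : IsTest Ω (pd f i) :=
  ⟨contDiff_pd hf.contDiff i, hasCompactSupport_pd hf.hasCompactSupport i,
    (tsupport_fderiv_apply_subset ℝ _).trans hf.2.2⟩

lemma mul (hf : IsTest Ω f) (hg : IsTest Ω g) : IsTest Ω (fun x => f x * g x) :=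
  ⟨hf.contDiff.mul hg.contDiff, hf.hasCompactSupport.mul_right,
    (tsupport_mul_subset_left (f := f) (g := g)).trans hf.2.2⟩

lemma add (hf : IsTest Ω f) (hg : IsTest Ω g) : IsTest Ω (fun x => f x + g x) :=
  ⟨hf.contDiff.add hg.contDiff, hf.hasCompactSupport.add hg.hasCompactSupport,
    (tsupport_add f g).trans (union_subset hf.2.2 hg.2.2)⟩

lemma const_mul (hf : IsTest Ω f) (c : ℝ) : IsTest Ω (fun x => c * f x) :=
  ⟨contDiff_const.mul hf.contDiff, hf.hasCompactSupport.mul_left,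
    (tsupport_mul_subset_right (f := fun _ => c) (g := f)).trans hf.2.2⟩

lemma lap (hf : IsTest Ω f) : IsTest Ω (lap f) := by
  have hsum := (((hf.pd 0).pd 0).add ((hf.pd 1).pd 1)).add ((hf.pd 2).pd 2)
  have hlap : _root_.lap f = _ :=
    funext fun x => Fin.sum_univ_three fun i => _root_.pd (_root_.pd f i) i x
  rwa [hlap]

lemma comp_smul (hf : IsTest univ f) {c : ℝ} (hc : c ≠ 0) : IsTest univ (fun x => f (c • x)) :=
  ⟨hf.contDiff.comp (contDiff_const_smul c), hf.hasCompactSupport.comp_smul hc, subset_univ _⟩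

lemma comp_const_sub (hf : IsTest univ f) (x : E3) : IsTest univ (fun y => f (x - y)) :=
  ⟨hf.contDiff.comp (contDiff_const.sub contDiff_id),
    hf.hasCompactSupport.comp_homeomorph (Homeomorph.subLeft x), subset_univ _⟩

end IsTest

lemma integral_pd_mul_pd_comm {f g : E3 → ℝ} (hf : ContDiff ℝ ∞ f) (hg : IsTest univ g)
    (i j : Fin 3) : ∫ x, pd f i x * pd g j x = ∫ x, pd f j x * pd g i x := by
  rw [integral_mul_pd_eq_neg ((contDiff_pd hf i).of_le (by simp)) hg.contDiff_one
      hg.hasCompactSupport,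
    integral_mul_pd_eq_neg ((contDiff_pd hf j).of_le (by simp)) hg.contDiff_one
      hg.hasCompactSupport, pd_comm hf]

lemma integral_mul_lap_comm {f g : E3 → ℝ} (hf : ContDiff ℝ ∞ f) (hg : IsTest univ g) :
    ∫ x, f x * lap g x = ∫ x, lap f x * g x := by
  have hparts (i : Fin 3) : ∫ x, f x * pd (pd g i) i x = ∫ x, pd (pd f i) i x * g x := by
    rw [integral_mul_pd_eq_neg (hf.of_le (by simp)) (hg.pd i).contDiff_one
        (hg.pd i).hasCompactSupport,
      integral_mul_pd_eq_neg ((contDiff_pd hf i).of_le (by simp)) hg.contDiff_one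
        hg.hasCompactSupport, neg_neg]
  simp only [lap, Finset.mul_sum, Finset.sum_mul]
  rw [integral_finsetSum, integral_finsetSum]
  · exact Finset.sum_congr rfl fun i _ => hparts i
  · exact fun i _ => ((contDiff_pd (contDiff_pd hf i) i).continuous.mul
      hg.continuous).integrable_of_hasCompactSupport hg.hasCompactSupport.mul_left
  · exact fun i _ => (hf.continuous.mul
      ((hg.pd i).pd i).continuous).integrable_of_hasCompactSupport
      ((hg.pd i).pd i).hasCompactSupport.mul_left

lemma integral_sq_lap_eq {f : E3 → ℝ} (hf : IsTest univ f) :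
    ∫ x, lap f x ^ 2 = ∑ i, ∑ j, ∫ x, pd (pd f i) j x ^ 2 := by
  have hint (i j : Fin 3) : Integrable (fun x => pd (pd f i) i x * pd (pd f j) j x) volume :=
    (((hf.pd i).pd i).mul ((hf.pd j).pd j)).integrable
  have hswap (i j : Fin 3) :
      ∫ x, pd (pd f i) i x * pd (pd f j) j x = ∫ x, pd (pd f i) j x ^ 2 := by
    rw [integral_pd_mul_pd_comm (hf.pd i).contDiff (hf.pd j)]
    simp only [pd_comm hf.contDiff j i, sq]
  have hsq (x : E3) : lap f x ^ 2 = ∑ i, ∑ j, pd (pd f i) i x * pd (pd f j) j x := by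
    rw [lap, sq, Finset.sum_mul_sum]
  simp_rw [hsq]
  rw [integral_finsetSum _ fun i _ => integrable_finsetSum _ fun j _ => hint i j]
  refine Finset.sum_congr rfl fun i _ => ?_
  rw [integral_finsetSum _ fun j _ => hint i j]
  exact Finset.sum_congr rfl fun j _ => hswap i j

lemma integral_sq_pd_pd_le {f : E3 → ℝ} (hf : IsTest univ f) (i j : Fin 3) :
    ∫ x, pd (pd f i) j x ^ 2 ≤ ∫ x, lap f x ^ 2 := by
  have hnonneg (a b : Fin 3) : 0 ≤ ∫ x, pd (pd f a) b x ^ 2 :=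
    integral_nonneg fun x => sq_nonneg _
  rw [integral_sq_lap_eq hf]
  calc ∫ x, pd (pd f i) j x ^ 2 ≤ ∑ b, ∫ x, pd (pd f i) b x ^ 2 :=
        Finset.single_le_sum (f := fun b => ∫ x, pd (pd f i) b x ^ 2)
          (fun b _ => hnonneg i b) (Finset.mem_univ j)
    _ ≤ _ := Finset.single_le_sum (f := fun a => ∑ b, ∫ x, pd (pd f a) b x ^ 2)
          (fun a _ => Finset.sum_nonneg fun b _ => hnonneg a b) (Finset.mem_univ i)

lemma exists_eLpNorm_six_le_sum_eLpNorm_pd : ∃ C : ℝ≥0, ∀ f : E3 → ℝ, IsTest univ f →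
    eLpNorm f 6 volume ≤ C * ∑ i, eLpNorm (pd f i) 2 volume := by
  refine ⟨SNormLESNormFDerivOfEqConst ℝ (volume : Measure E3) (2 : ℝ≥0), fun f hf => ?_⟩
  have hsob : eLpNorm f 6 volume
      ≤ SNormLESNormFDerivOfEqConst ℝ (volume : Measure E3) (2 : ℝ≥0)
        * eLpNorm (fderiv ℝ f) 2 volume :=
    mod_cast eLpNorm_le_eLpNorm_fderiv_of_eq (μ := (volume : Measure E3)) (p := 2) (p' := 6)
      hf.contDiff_one hf.hasCompactSupport (by norm_num) (by simp) (by simp; norm_num)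
  refine hsob.trans ?_
  gcongr
  calc eLpNorm (fderiv ℝ f) 2 volume
      ≤ eLpNorm (∑ i, fun x => |pd f i x|) 2 volume :=
        eLpNorm_mono_real fun x => by simpa using norm_fderiv_le_sum_abs_pd f x
    _ ≤ ∑ i, eLpNorm (fun x => |pd f i x|) 2 volume :=
        eLpNorm_sum_le (fun i _ => (hf.pd i).continuous.abs.aestronglyMeasurable) (by norm_num)
    _ = ∑ i, eLpNorm (pd f i) 2 volume :=
        Finset.sum_congr rfl fun i _ => eLpNorm_norm (pd f i)

/-- Cutoff functions: test functions with values in `[0, 1]` converging pointwise to `1`, whose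
first derivatives and Laplacians decay uniformly at the rate `C / (n + 1)`. -/
structure IsCutoffSeq (χ : ℕ → E3 → ℝ) (C : ℝ) : Prop where
  isTest : ∀ n, IsTest univ (χ n)
  nonneg : ∀ n x, 0 ≤ χ n x
  le_one : ∀ n x, χ n x ≤ 1
  tendsto : ∀ x, Tendsto (fun n => χ n x) atTop (𝓝 1)
  abs_pd_le : ∀ n i x, |pd (χ n) i x| ≤ C / (n + 1)
  abs_lap_le : ∀ n x, |lap (χ n) x| ≤ C / (n + 1)

lemma exists_isCutoffSeq : ∃ χ C, IsCutoffSeq χ C := by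
  let b : ContDiffBump (0 : E3) := ⟨1, 2, by norm_num, by norm_num⟩
  have hb : IsTest univ b := ⟨b.contDiff, b.hasCompactSupport, subset_univ _⟩
  choose C hC using fun i => (hb.pd i).exists_abs_le
  obtain ⟨C', hC'⟩ := hb.lap.exists_abs_le
  have hpos (n : ℕ) : (0 : ℝ) < n + 1 := by positivity
  have hone (n : ℕ) : ((n : ℝ) + 1)⁻¹ ≤ 1 := inv_le_one_of_one_le₀ (by simp)
  have hC0 (i : Fin 3) : 0 ≤ C i := (abs_nonneg _).trans (hC i 0)
  have hC0' : 0 ≤ C' := (abs_nonneg _).trans (hC' 0)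
  refine ⟨fun n x => b (((n : ℝ) + 1)⁻¹ • x), ∑ i, C i + C',
    fun n => hb.comp_smul (inv_ne_zero (hpos n).ne'), fun n x => b.nonneg, fun n x => b.le_one,
    fun x => ?_, fun n i x => ?_, fun n x => ?_⟩
  · refine tendsto_const_nhds.congr' ?_
    filter_upwards [eventually_ge_atTop ⌈‖x‖⌉₊] with n hn
    refine (b.one_of_mem_closedBall ?_).symm
    rw [mem_closedBall, dist_zero_right, norm_smul, Real.norm_of_nonneg (inv_nonneg.2 (hpos n).le),
      inv_mul_le_iff₀ (hpos n), mul_one]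
    exact (Nat.ceil_le.1 hn).trans (by simp)
  · rw [pd_comp_smul hb.differentiable, abs_mul,
      abs_of_nonneg (inv_nonneg.2 (hpos n).le), inv_mul_eq_div]
    gcongr
    have := Finset.single_le_sum (fun i _ => hC0 i) (Finset.mem_univ i)
    linarith [hC i ((n + 1 : ℝ)⁻¹ • x)]
  · rw [lap_comp_smul hb.contDiff, mul_assoc, abs_mul,
      abs_of_nonneg (inv_nonneg.2 (hpos n).le), inv_mul_eq_div]
    gcongr
    rw [abs_mul, abs_of_nonneg (inv_nonneg.2 (hpos n).le)]
    have := Finset.sum_nonneg fun i (_ : i ∈ Finset.univ) => hC0 i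
    have := hC' ((n + 1 : ℝ)⁻¹ • x)
    nlinarith [hone n, abs_nonneg (lap b ((n + 1 : ℝ)⁻¹ • x))]

lemma tendsto_integral_mul_of_abs_le_div {α : Type*} [MeasurableSpace α] {μ : Measure α}
    {f : α → ℝ} {g : ℕ → α → ℝ} {C : ℝ} (hf : Integrable f μ)
    (hg : ∀ n x, |g n x| ≤ C / (n + 1)) : Tendsto (fun n => ∫ x, f x * g n x ∂μ) atTop (𝓝 0) := by
  refine squeeze_zero_norm (a := fun n : ℕ => (∫ x, ‖f x‖ ∂μ) * (C / (n + 1))) (fun n => ?_) ?_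
  · rw [← integral_mul_const]
    refine norm_integral_le_of_norm_le (hf.norm.mul_const _) (Eventually.of_forall fun x => ?_)
    rw [norm_mul]
    exact mul_le_mul_of_nonneg_left (hg n x) (norm_nonneg _)
  · have hrate := tendsto_one_div_add_atTop_nhds_zero_nat (𝕜 := ℝ) |>.const_mul C
    simpa [div_eq_mul_inv] using hrate.const_mul (∫ x, ‖f x‖ ∂μ)

namespace IsCutoffSeq

variable {χ : ℕ → E3 → ℝ} {C : ℝ} {f : E3 → ℝ}

lemma tendsto_integral_mul (hχ : IsCutoffSeq χ C) (hf : Integrable f volume) :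
    Tendsto (fun n => ∫ x, f x * χ n x) atTop (𝓝 (∫ x, f x)) := by
  refine tendsto_integral_of_dominated_convergence (fun x => ‖f x‖)
    (fun n => hf.1.mul (hχ.isTest n).continuous.aestronglyMeasurable) hf.norm
    (fun n => Eventually.of_forall fun x => ?_) (Eventually.of_forall fun x => ?_)
  · rw [norm_mul, Real.norm_of_nonneg (hχ.nonneg n x)]
    exact mul_le_of_le_one_right (norm_nonneg _) (hχ.le_one n x)
  · simpa using (hχ.tendsto x).const_mul (f x)

lemma tendsto_integral_mul_pd (hχ : IsCutoffSeq χ C) (hf : Integrable f volume) (i : Fin 3) :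
    Tendsto (fun n => ∫ x, f x * pd (χ n) i x) atTop (𝓝 0) :=
  tendsto_integral_mul_of_abs_le_div hf (hχ.abs_pd_le · i)

lemma tendsto_integral_mul_lap (hχ : IsCutoffSeq χ C) (hf : Integrable f volume) :
    Tendsto (fun n => ∫ x, f x * lap (χ n) x) atTop (𝓝 0) :=
  tendsto_integral_mul_of_abs_le_div hf hχ.abs_lap_le

lemma ae_eq_zero_of_tendsto_integral_mul (hχ : IsCutoffSeq χ C)
    (hf : AEStronglyMeasurable f volume) (hf0 : ∀ x, 0 ≤ f x)
    (hint : ∀ n, Integrable (fun x => f x * χ n x) volume)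
    (hlim : Tendsto (fun n => ∫ x, f x * χ n x) atTop (𝓝 0)) : f =ᵐ[volume] 0 := by
  have hnonneg (n : ℕ) (x : E3) : 0 ≤ f x * χ n x := mul_nonneg (hf0 x) (hχ.nonneg n x)
  have hpointwise (x : E3) :
      liminf (fun n => ENNReal.ofReal (f x * χ n x)) atTop = ENNReal.ofReal (f x) :=
    (ENNReal.tendsto_ofReal (by simpa using (hχ.tendsto x).const_mul (f x))).liminf_eq
  have hlintegral : ∫⁻ x, ENNReal.ofReal (f x) ≤ 0 := by
    calc ∫⁻ x, ENNReal.ofReal (f x)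
        = ∫⁻ x, liminf (fun n => ENNReal.ofReal (f x * χ n x)) atTop := by simp only [hpointwise]
      _ ≤ liminf (fun n => ∫⁻ x, ENNReal.ofReal (f x * χ n x)) atTop :=
          lintegral_liminf_le' fun n => (hint n).1.aemeasurable.ennreal_ofReal
      _ = liminf (fun n => ENNReal.ofReal (∫ x, f x * χ n x)) atTop := by
          simp only [ofReal_integral_eq_lintegral_ofReal (hint _)
            (Eventually.of_forall (hnonneg _))]
      _ = 0 := by simpa using (ENNReal.tendsto_ofReal hlim).liminf_eq
  filter_upwards [(lintegral_eq_zero_iff' hf.aemeasurable.ennreal_ofReal).1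
    (nonpos_iff_eq_zero.1 hlintegral)] with x hx
  exact le_antisymm (ENNReal.ofReal_eq_zero.1 hx) (hf0 x)

end IsCutoffSeq

/-! ### Convergence in `L^p` -/

/-- Convergence of `f i` to `f₀` in `L^p` along the filter `l`, together with membership of all
functions involved in `L^p`; a version of convergence in `Lp` for honest functions. -/
structure TendstoLp {α ι : Type*} [MeasurableSpace α] (f : ι → α → ℝ) (l : Filter ι)
    (f₀ : α → ℝ) (p : ℝ≥0∞) (μ : Measure α) : Prop where
  memLp : ∀ i, MemLp (f i) p μ
  memLp_lim : MemLp f₀ p μ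
  tendsto : Tendsto (fun i => eLpNorm (fun x => f i x - f₀ x) p μ) l (𝓝 0)

section LpTools

variable {α β ι : Type*} [MeasurableSpace α] [MeasurableSpace β] {μ : Measure α} {ν : Measure β}
  {l : Filter ι} {p q r : ℝ≥0∞}

lemma holderTriple_ofReal {a b c : ℝ} (ha : 0 < a) (hb : 0 < b) (hc : 0 < c)
    (h : a⁻¹ + b⁻¹ = c⁻¹) :
    ENNReal.HolderTriple (ENNReal.ofReal a) (ENNReal.ofReal b) (ENNReal.ofReal c) :=
  ⟨by rw [← ENNReal.ofReal_inv_of_pos ha, ← ENNReal.ofReal_inv_of_pos hb,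
    ← ENNReal.ofReal_inv_of_pos hc, ← ENNReal.ofReal_add (by positivity) (by positivity), h]⟩

lemma eLpNorm_fun_mul_le [ENNReal.HolderTriple p q r] {f g : α → ℝ}
    (hf : AEStronglyMeasurable f μ) (hg : AEStronglyMeasurable g μ) :
    eLpNorm (fun x => f x * g x) r μ ≤ eLpNorm f p μ * eLpNorm g q μ :=
  eLpNorm_smul_le_mul_eLpNorm (φ := f) hg hf

lemma abs_integral_mul_le [ENNReal.HolderTriple p q 1] {f g : α → ℝ} (hf : MemLp f p μ)
    (hg : MemLp g q μ) :
    |∫ x, f x * g x ∂μ| ≤ (eLpNorm f p μ).toReal * (eLpNorm g q μ).toReal := by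
  rw [← ENNReal.toReal_mul, ← Real.norm_eq_abs, ← toReal_enorm]
  refine ENNReal.toReal_mono (ENNReal.mul_ne_top hf.2.ne hg.2.ne) ?_
  refine (enorm_integral_le_lintegral_enorm _).trans ?_
  rw [← eLpNorm_one_eq_lintegral_enorm]
  exact eLpNorm_fun_mul_le hf.1 hg.1

namespace TendstoLp

variable {f g : ι → α → ℝ} {f₀ g₀ : α → ℝ}

lemma const (hf : MemLp f₀ p μ) : TendstoLp (fun _ : ι => f₀) l f₀ p μ :=
  ⟨fun _ => hf, hf, by simpa using tendsto_const_nhds⟩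

lemma tendsto_eLpNorm (hf : TendstoLp f l f₀ p μ) (hp : 1 ≤ p) :
    Tendsto (fun i => eLpNorm (f i) p μ) l (𝓝 (eLpNorm f₀ p μ)) := by
  have hsymm (i : ι) : eLpNorm (fun x => f₀ x - f i x) p μ = eLpNorm (fun x => f i x - f₀ x) p μ :=
    eLpNorm_sub_comm _ _ p μ
  have hupper (i : ι) :
      eLpNorm (f i) p μ ≤ eLpNorm f₀ p μ + eLpNorm (fun x => f i x - f₀ x) p μ := by
    have h := eLpNorm_add_le hf.memLp_lim.1 ((hf.memLp i).1.sub hf.memLp_lim.1) hp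
    rwa [add_sub_cancel] at h
  have hlower (i : ι) :
      eLpNorm f₀ p μ - eLpNorm (fun x => f i x - f₀ x) p μ ≤ eLpNorm (f i) p μ := by
    rw [tsub_le_iff_right, ← hsymm]
    have h := eLpNorm_add_le (hf.memLp i).1 (hf.memLp_lim.1.sub (hf.memLp i).1) hp
    rwa [add_sub_cancel] at h
  refine tendsto_of_tendsto_of_tendsto_of_le_of_le ?_ ?_ hlower hupper
  · simpa using ENNReal.Tendsto.sub tendsto_const_nhds hf.tendsto (Or.inr ENNReal.zero_ne_top)
  · simpa using tendsto_const_nhds.add hf.tendsto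

lemma mul [ENNReal.HolderTriple p q r] (hf : TendstoLp f l f₀ p μ) (hg : TendstoLp g l g₀ q μ)
    (hr : 1 ≤ r) : TendstoLp (fun i x => f i x * g i x) l (fun x => f₀ x * g₀ x) r μ := by
  refine ⟨fun i => (hg.memLp i).mul' (hf.memLp i), hg.memLp_lim.mul' hf.memLp_lim, ?_⟩
  have hbound (i : ι) : eLpNorm (fun x => f i x * g i x - f₀ x * g₀ x) r μ ≤
      eLpNorm (fun x => f i x - f₀ x) p μ * eLpNorm (fun x => g i x - g₀ x) q μ
      + eLpNorm (fun x => f i x - f₀ x) p μ * eLpNorm g₀ q μ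
      + eLpNorm f₀ p μ * eLpNorm (fun x => g i x - g₀ x) q μ := by
    have hdf : AEStronglyMeasurable (fun x => f i x - f₀ x) μ :=
      (hf.memLp i).1.sub hf.memLp_lim.1
    have hdg : AEStronglyMeasurable (fun x => g i x - g₀ x) μ :=
      (hg.memLp i).1.sub hg.memLp_lim.1
    have hsplit : (fun x => f i x * g i x - f₀ x * g₀ x)
        = ((fun x => (f i x - f₀ x) * (g i x - g₀ x)) + fun x => (f i x - f₀ x) * g₀ x)
          + fun x => f₀ x * (g i x - g₀ x) := by
      ext x
      simp only [Pi.add_apply]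
      ring
    rw [hsplit]
    exact (eLpNorm_add_le ((hdf.mul hdg).add (hdf.mul hg.memLp_lim.1))
      (hf.memLp_lim.1.mul hdg) hr).trans (add_le_add
      ((eLpNorm_add_le (hdf.mul hdg) (hdf.mul hg.memLp_lim.1) hr).trans (add_le_add
        (eLpNorm_fun_mul_le hdf hdg) (eLpNorm_fun_mul_le hdf hg.memLp_lim.1)))
      (eLpNorm_fun_mul_le hf.memLp_lim.1 hdg))
  refine tendsto_of_tendsto_of_tendsto_of_le_of_le tendsto_const_nhds ?_ (fun _ => zero_le) hbound
  simpa using ((ENNReal.Tendsto.mul hf.tendsto (Or.inr ENNReal.zero_ne_top) hg.tendsto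
      (Or.inr ENNReal.zero_ne_top)).add
    (ENNReal.Tendsto.mul_const hf.tendsto (Or.inr hg.memLp_lim.2.ne))).add
    (ENNReal.Tendsto.const_mul hg.tendsto (Or.inr hf.memLp_lim.2.ne))

lemma tendsto_integral_mul [ENNReal.HolderTriple p q 1] (hf : TendstoLp f l f₀ p μ)
    (hg : TendstoLp g l g₀ q μ) :
    Tendsto (fun i => ∫ x, f i x * g i x ∂μ) l (𝓝 (∫ x, f₀ x * g₀ x ∂μ)) := by
  have hfg := hf.mul hg (r := 1) le_rfl
  exact tendsto_integral_of_L1' _ hfg.memLp_lim.1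
    (Eventually.of_forall fun i => memLp_one_iff_integrable.1 (hfg.memLp i)) hfg.tendsto

end TendstoLp

lemma abs_rpow_sub_rpow_le {x y s : ℝ} (hx : 0 ≤ x) (hy : 0 ≤ y) (hs : 1 ≤ s) :
    |x ^ s - y ^ s| ≤ s * (|x - y| * (x ^ (s - 1) + y ^ (s - 1))) := by
  wlog hxy : y ≤ x generalizing x y
  · rw [abs_sub_comm, abs_sub_comm x y, add_comm]
    exact this hy hx (le_of_not_ge hxy)
  rw [abs_of_nonneg (sub_nonneg.2 (Real.rpow_le_rpow hy hxy (by linarith))),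
    abs_of_nonneg (sub_nonneg.2 hxy)]
  rcases hx.eq_or_lt with rfl | hx0
  · simp [le_antisymm hxy hy]
  have hbernoulli : x ^ s - s * ((x - y) * x ^ (s - 1)) ≤ y ^ s := by
    have h := one_add_mul_self_le_rpow_one_add (s := y / x - 1) (p := s)
      (by linarith [div_nonneg hy hx]) hs
    rw [add_sub_cancel, Real.div_rpow hy hx, le_div_iff₀ (Real.rpow_pos_of_pos hx0 _)] at h
    refine le_trans (le_of_eq ?_) h
    rw [Real.rpow_sub_one hx0.ne']
    field_simp
    ring
  have hnonneg : 0 ≤ s * ((x - y) * y ^ (s - 1)) :=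
    mul_nonneg (by linarith) (mul_nonneg (by linarith) (Real.rpow_nonneg hy _))
  linarith

lemma eLpNorm_rpow_ofReal {f : α → ℝ} (hf : ∀ x, 0 ≤ f x) {P s : ℝ} (hP : 0 ≤ P) (hs : 0 < s) :
    eLpNorm (fun x => f x ^ s) (ENNReal.ofReal (P / s)) μ
      = eLpNorm f (ENNReal.ofReal P) μ ^ s := by
  have h := eLpNorm_norm_rpow (p := ENNReal.ofReal (P / s)) (μ := μ) f hs
  rw [← ENNReal.ofReal_mul (by positivity), div_mul_cancel₀ _ hs.ne'] at h
  simpa only [Real.norm_of_nonneg (hf _)] using h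

lemma memLp_rpow_ofReal {f : α → ℝ} (hf : ∀ x, 0 ≤ f x) {P s : ℝ} (hP : 0 ≤ P) (hs : 0 < s)
    (h : MemLp f (ENNReal.ofReal P) μ) :
    MemLp (fun x => f x ^ s) (ENNReal.ofReal (P / s)) μ := by
  refine ⟨(h.1.aemeasurable.pow_const s).aestronglyMeasurable, ?_⟩
  rw [eLpNorm_rpow_ofReal hf hP hs]
  exact ENNReal.rpow_lt_top_of_nonneg hs.le h.2.ne

lemma eLpNorm_rpow_sub_rpow_le {f g : α → ℝ} {P s : ℝ} (hs : 1 < s) (hsP : s - 1 ≤ P)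
    (hf : ∀ x, 0 ≤ f x) (hg : ∀ x, 0 ≤ g x) (hfm : AEStronglyMeasurable f μ)
    (hgm : AEStronglyMeasurable g μ) :
    eLpNorm (fun x => f x ^ s - g x ^ s) (ENNReal.ofReal (P / s)) μ ≤
      ENNReal.ofReal s * (eLpNorm (fun x => f x - g x) (ENNReal.ofReal P) μ *
        (eLpNorm f (ENNReal.ofReal P) μ ^ (s - 1) + eLpNorm g (ENNReal.ofReal P) μ ^ (s - 1))) := by
  have hs1 : 0 < s - 1 := by linarith
  have hP : 0 < P := by linarith
  have : ENNReal.HolderTriple (ENNReal.ofReal P) (ENNReal.ofReal (P / (s - 1)))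
      (ENNReal.ofReal (P / s)) :=
    holderTriple_ofReal hP (by positivity) (by positivity) (by
      rw [inv_div, inv_div]; field_simp; ring)
  have hfs : AEStronglyMeasurable (fun x => f x ^ (s - 1)) μ :=
    (hfm.aemeasurable.pow_const _).aestronglyMeasurable
  have hgs : AEStronglyMeasurable (fun x => g x ^ (s - 1)) μ :=
    (hgm.aemeasurable.pow_const _).aestronglyMeasurable
  calc eLpNorm (fun x => f x ^ s - g x ^ s) (ENNReal.ofReal (P / s)) μ
      ≤ eLpNorm (s • fun x => (f x - g x) * (f x ^ (s - 1) + g x ^ (s - 1)))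
          (ENNReal.ofReal (P / s)) μ := by
        refine eLpNorm_mono fun x => ?_
        simp only [Pi.smul_apply, smul_eq_mul, norm_mul, Real.norm_eq_abs]
        rw [abs_of_pos (by linarith : 0 < s), abs_of_nonneg (add_nonneg
          (Real.rpow_nonneg (hf x) _) (Real.rpow_nonneg (hg x) _))]
        exact abs_rpow_sub_rpow_le (hf x) (hg x) hs.le
    _ = ENNReal.ofReal s * eLpNorm (fun x => (f x - g x) * (f x ^ (s - 1) + g x ^ (s - 1)))
          (ENNReal.ofReal (P / s)) μ := by
        rw [eLpNorm_const_smul, Real.enorm_of_nonneg (by linarith)]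
    _ ≤ _ := by
        refine mul_le_mul_right ((eLpNorm_fun_mul_le (q := ENNReal.ofReal (P / (s - 1)))
          (hfm.sub hgm) (hfs.add hgs)).trans (mul_le_mul_right ?_ _)) _
        rw [← eLpNorm_rpow_ofReal hf hP.le hs1, ← eLpNorm_rpow_ofReal hg hP.le hs1]
        exact eLpNorm_add_le hfs hgs (ENNReal.one_le_ofReal.2 ((one_le_div hs1).2 hsP))

lemma TendstoLp.rpow {f : ι → α → ℝ} {f₀ : α → ℝ} {P s : ℝ} (hs : 1 < s) (hsP : s ≤ P)
    (hf : TendstoLp f l f₀ (ENNReal.ofReal P) μ) (hpos : ∀ i x, 0 ≤ f i x)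
    (hpos₀ : ∀ x, 0 ≤ f₀ x) :
    TendstoLp (fun i x => f i x ^ s) l (fun x => f₀ x ^ s) (ENNReal.ofReal (P / s)) μ := by
  have hs1 : 0 < s - 1 := by linarith
  have hnorm := hf.tendsto_eLpNorm (ENNReal.one_le_ofReal.2 (by linarith))
  refine ⟨fun i => memLp_rpow_ofReal (hpos i) (by linarith) (by linarith) (hf.memLp i),
    memLp_rpow_ofReal hpos₀ (by linarith) (by linarith) hf.memLp_lim, ?_⟩
  refine tendsto_of_tendsto_of_tendsto_of_le_of_le tendsto_const_nhds ?_ (fun _ => zero_le)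
    fun i => eLpNorm_rpow_sub_rpow_le hs (by linarith) (hpos i) hpos₀ (hf.memLp i).1
      hf.memLp_lim.1
  have hfin : eLpNorm f₀ (ENNReal.ofReal P) μ ^ (s - 1)
      + eLpNorm f₀ (ENNReal.ofReal P) μ ^ (s - 1) ≠ ⊤ := by
    simp [ENNReal.rpow_eq_top_iff, hf.memLp_lim.2.ne, hs1.not_gt]
  simpa using ENNReal.Tendsto.const_mul (ENNReal.Tendsto.mul hf.tendsto (Or.inr hfin)
    ((hnorm.ennrpow_const (s - 1)).add tendsto_const_nhds) (Or.inr ENNReal.zero_ne_top))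
    (Or.inr ENNReal.ofReal_ne_top)

lemma eLpNorm_rpow_toReal (hp : 1 ≤ p) (hp' : p ≠ ⊤) (f : α → ℝ) :
    eLpNorm f p μ ^ p.toReal = ∫⁻ x, ‖f x‖ₑ ^ p.toReal ∂μ := by
  have hp0 : p ≠ 0 := (one_pos.trans_le hp).ne'
  rw [eLpNorm_eq_lintegral_rpow_enorm_toReal hp0 hp', ← ENNReal.rpow_mul, one_div,
    inv_mul_cancel₀ (ENNReal.toReal_pos hp0 hp').ne', ENNReal.rpow_one]

lemma lintegral_rpow_lintegral_enorm_le [IsFiniteMeasure ν] [SFinite μ] {F : α → β → ℝ} (hp : 1 ≤ p)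
    (hp' : p ≠ ⊤) (hF : AEStronglyMeasurable (Function.uncurry F) (μ.prod ν)) :
    ∫⁻ x, (∫⁻ z, ‖F x z‖ₑ ∂ν) ^ p.toReal ∂μ
      ≤ ν univ ^ (p.toReal - 1) * ∫⁻ z, eLpNorm (fun x => F x z) p μ ^ p.toReal ∂ν := by
  have hpt : 1 ≤ p.toReal := by simpa using ENNReal.toReal_mono hp' hp
  have hjensen : ∀ᵐ x ∂μ, (∫⁻ z, ‖F x z‖ₑ ∂ν) ^ p.toReal
      ≤ ν univ ^ (p.toReal - 1) * ∫⁻ z, ‖F x z‖ₑ ^ p.toReal ∂ν := by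
    filter_upwards [hF.prodMk_left] with x hx
    have h := ENNReal.rpow_le_rpow (eLpNorm_le_eLpNorm_mul_rpow_measure_univ hp hx)
      (by linarith : 0 ≤ p.toReal)
    rw [ENNReal.mul_rpow_of_nonneg _ _ (by linarith), eLpNorm_rpow_toReal hp hp',
      eLpNorm_one_eq_lintegral_enorm, ← ENNReal.rpow_mul, mul_comm] at h
    refine h.trans_eq ?_
    congr 2
    simp only [ENNReal.toReal_one]
    field_simp
  calc ∫⁻ x, (∫⁻ z, ‖F x z‖ₑ ∂ν) ^ p.toReal ∂μ
      ≤ ∫⁻ x, ν univ ^ (p.toReal - 1) * ∫⁻ z, ‖F x z‖ₑ ^ p.toReal ∂ν ∂μ := lintegral_mono_ae hjensen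
    _ = ν univ ^ (p.toReal - 1) * ∫⁻ x, ∫⁻ z, ‖F x z‖ₑ ^ p.toReal ∂ν ∂μ :=
        lintegral_const_mul' _ _ (ENNReal.rpow_ne_top_of_nonneg (by linarith) (measure_ne_top ν _))
    _ = _ := by
        rw [lintegral_lintegral_swap (hF.enorm.pow_const _)]
        simp only [eLpNorm_rpow_toReal hp hp']

lemma eLpNorm_integral_mul_le [SFinite μ] [SFinite ν] {k : β → ℝ} {F : α → β → ℝ} {C : ℝ≥0∞}
    (hp : 1 ≤ p) (hp' : p ≠ ⊤) (hk : Integrable k ν)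
    (hF : AEStronglyMeasurable (Function.uncurry F) (μ.prod ν))
    (hC : ∀ z, k z ≠ 0 → eLpNorm (fun x => F x z) p μ ≤ C) :
    eLpNorm (fun x => ∫ z, k z * F x z ∂ν) p μ ≤ eLpNorm k 1 ν * C := by
  set P : Measure β := ν.withDensity fun z => ‖k z‖ₑ
  have hkm : AEMeasurable (fun z => ‖k z‖ₑ) ν := hk.1.enorm
  have hmass : P univ = eLpNorm k 1 ν := by
    rw [withDensity_apply _ MeasurableSet.univ, setLIntegral_univ, eLpNorm_one_eq_lintegral_enorm]
  have : IsFiniteMeasure P := isFiniteMeasure_withDensity hk.2.ne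
  have hpt : 1 ≤ p.toReal := by simpa using ENNReal.toReal_mono hp' hp
  have hpt0 : 0 < p.toReal := by linarith
  have hFP : AEStronglyMeasurable (Function.uncurry F) (μ.prod P) :=
    hF.mono_ac (Measure.AbsolutelyContinuous.rfl.prod (withDensity_absolutelyContinuous _ _))
  have hpointwise (x : α) : ‖∫ z, k z * F x z ∂ν‖ₑ ≤ ∫⁻ z, ‖F x z‖ₑ ∂P := by
    refine (enorm_integral_le_lintegral_enorm _).trans_eq ?_
    rw [lintegral_withDensity_eq_lintegral_mul_non_measurable₀ ν hkm (by simp)]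
    simp [enorm_mul]
  have hbound : ∫⁻ z, eLpNorm (fun x => F x z) p μ ^ p.toReal ∂P ≤ C ^ p.toReal * P univ := by
    rw [← lintegral_const]
    refine lintegral_mono_ae ?_
    rw [ae_withDensity_iff' hkm]
    exact Eventually.of_forall fun z hz =>
      ENNReal.rpow_le_rpow (hC z (by simpa using hz)) hpt0.le
  rw [← ENNReal.rpow_le_rpow_iff hpt0, eLpNorm_rpow_toReal hp hp']
  calc ∫⁻ x, ‖∫ z, k z * F x z ∂ν‖ₑ ^ p.toReal ∂μ
      ≤ ∫⁻ x, (∫⁻ z, ‖F x z‖ₑ ∂P) ^ p.toReal ∂μ :=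
        lintegral_mono fun x => ENNReal.rpow_le_rpow (hpointwise x) hpt0.le
    _ ≤ P univ ^ (p.toReal - 1) * (C ^ p.toReal * P univ) :=
        (lintegral_rpow_lintegral_enorm_le hp hp' hFP).trans (by gcongr)
    _ = (eLpNorm k 1 ν * C) ^ p.toReal := by
        rw [ENNReal.mul_rpow_of_nonneg _ _ hpt0.le, ← hmass, mul_comm (C ^ _), ← mul_assoc]
        congr 1
        simpa using (ENNReal.rpow_add_of_nonneg (x := P univ) (p.toReal - 1) 1
          (by linarith) zero_le_one).symm

end LpTools

section Convolution

open ContinuousLinearMap (lsmul)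

lemma eLpNorm_comp_add_right {A : Type*} [MeasurableSpace A] [AddGroup A] [MeasurableAdd A]
    {μ : Measure A} [μ.IsAddRightInvariant] {p : ℝ≥0∞} {a : A → ℝ}
    (ha : AEStronglyMeasurable a μ) (z : A) :
    eLpNorm (fun x => a (x + z)) p μ = eLpNorm a p μ :=
  eLpNorm_comp_measurePreserving ha (measurePreserving_add_right μ z)

lemma memLp_comp_add_right {A : Type*} [MeasurableSpace A] [AddGroup A] [MeasurableAdd A]
    {μ : Measure A} [μ.IsAddRightInvariant] {p : ℝ≥0∞} {a : A → ℝ} (ha : MemLp a p μ) (z : A) :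
    MemLp (fun x => a (x + z)) p μ :=
  ha.comp_measurePreserving (measurePreserving_add_right μ z)

lemma eLpNorm_comp_add_right_sub_le {A : Type*} [MeasurableSpace A] [AddGroup A] [MeasurableAdd A]
    {μ : Measure A} [μ.IsAddRightInvariant] {p : ℝ≥0∞} (hp : 1 ≤ p) {f g : A → ℝ}
    (hf : AEStronglyMeasurable f μ) (hg : AEStronglyMeasurable g μ) (z : A) :
    eLpNorm (fun x => f (x + z) - f x) p μ
      ≤ eLpNorm (fun x => g (x + z) - g x) p μ + 2 * eLpNorm (fun x => f x - g x) p μ := by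
  have hz := (measurePreserving_add_right μ z).quasiMeasurePreserving
  have hfz : AEStronglyMeasurable (fun x => f (x + z)) μ := hf.comp_quasiMeasurePreserving hz
  have hgz : AEStronglyMeasurable (fun x => g (x + z)) μ := hg.comp_quasiMeasurePreserving hz
  have hsplit : (fun x => f (x + z) - f x)
      = (fun x => g (x + z) - g x) + ((fun x => f (x + z) - g (x + z)) - fun x => f x - g x) := by
    ext x
    simp only [Pi.add_apply, Pi.sub_apply]
    ring
  rw [hsplit, two_mul]
  refine (eLpNorm_add_le (hgz.sub hg) ((hfz.sub hgz).sub (hf.sub hg)) hp).trans ?_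
  refine add_le_add le_rfl ((eLpNorm_sub_le (hfz.sub hgz) (hf.sub hg) hp).trans_eq ?_)
  exact congrArg (· + _) (eLpNorm_comp_add_right (a := fun x => f x - g x) (hf.sub hg) z)

variable {E ι : Type*} [NormedAddCommGroup E] [NormedSpace ℝ E] [FiniteDimensional ℝ E]
  [MeasurableSpace E] [BorelSpace E] {μ : Measure E} [μ.IsAddHaarMeasure] {l : Filter ι}
  {p : ℝ≥0∞} {a k : E → ℝ}

lemma aestronglyMeasurable_comp_sub (ha : AEStronglyMeasurable a μ) :
    AEStronglyMeasurable (fun q : E × E => a (q.1 - q.2)) (μ.prod μ) :=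
  ha.comp_quasiMeasurePreserving (quasiMeasurePreserving_sub_of_right_invariant μ μ)

lemma tendstoLp_comp_add (hp : 1 ≤ p) (hp' : p ≠ ⊤) (ha : MemLp a p μ) {z : ι → E}
    (hz : Tendsto z l (𝓝 0)) : TendstoLp (fun i x => a (x + z i)) l a p μ := by
  have : Fact (1 ≤ p) := ⟨hp⟩
  refine ⟨fun i => memLp_comp_add_right ha (z i), ha, ?_⟩
  let shift : E → C(E, E) := fun w => ⟨fun x => x + w, by fun_prop⟩
  have hshift : Continuous shift :=
    ContinuousMap.continuous_of_continuous_uncurry _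
      (continuous_snd.add continuous_fst)
  have hpres (w : E) : MeasurePreserving (shift w) μ μ := measurePreserving_add_right μ w
  have hcont : Continuous fun w => Lp.compMeasurePreserving (shift w) (hpres w) (ha.toLp a) :=
    Continuous.compMeasurePreservingLp continuous_const hshift hpres hp'
  have hedist := tendsto_iff_edist_tendsto_0.1 ((hcont.tendsto 0).comp hz)
  refine hedist.congr fun i => ?_
  rw [Function.comp_apply, Lp.edist_def]
  have hae (w : E) : Lp.compMeasurePreserving (shift w) (hpres w) (ha.toLp a)
      =ᵐ[μ] fun x => a (x + w) :=
    (Lp.coeFn_compMeasurePreserving (ha.toLp a) (hpres w)).trans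
      ((hpres w).quasiMeasurePreserving.ae_eq_comp ha.coeFn_toLp)
  refine eLpNorm_congr_ae ?_
  filter_upwards [hae (z i), hae 0] with x hx hx0
  rw [Pi.sub_apply, hx, hx0, add_zero]

lemma eLpNorm_convolution_le (hp : 1 ≤ p) (hp' : p ≠ ⊤) (hk : Integrable k μ)
    (ha : AEStronglyMeasurable a μ) :
    eLpNorm (k ⋆[lsmul ℝ ℝ, μ] a) p μ ≤ eLpNorm k 1 μ * eLpNorm a p μ :=
  eLpNorm_integral_mul_le (F := fun x z => a (x - z)) hp hp' hk (aestronglyMeasurable_comp_sub ha)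
    fun z _ => by simp only [sub_eq_add_neg, eLpNorm_comp_add_right ha, le_refl]

lemma memLp_convolution (hp : 1 ≤ p) (hp' : p ≠ ⊤) (hk : Integrable k μ) (ha : MemLp a p μ) :
    MemLp (k ⋆[lsmul ℝ ℝ, μ] a) p μ := by
  refine ⟨?_, (eLpNorm_convolution_le hp hp' hk ha.1).trans_lt
    (ENNReal.mul_lt_top (memLp_one_iff_integrable.2 hk).2 ha.2)⟩
  exact ((hk.1.comp_snd.mul (aestronglyMeasurable_comp_sub ha.1))).integral_prod_right'

lemma eLpNorm_convolution_sub_le {ε : ℝ≥0∞} (hp : 1 ≤ p) (hp' : p ≠ ⊤) (hk : Continuous k)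
    (hkc : HasCompactSupport k) (hk1 : ∫ z, k z ∂μ = 1) (ha : MemLp a p μ)
    (hε : ∀ z, k z ≠ 0 → eLpNorm (fun x => a (x - z) - a x) p μ ≤ ε) :
    eLpNorm (fun x => (k ⋆[lsmul ℝ ℝ, μ] a) x - a x) p μ ≤ eLpNorm k 1 μ * ε := by
  have hki : Integrable k μ := hk.integrable_of_hasCompactSupport hkc
  have hloc : LocallyIntegrable a μ := ha.locallyIntegrable hp
  have hdiff (x : E) : (k ⋆[lsmul ℝ ℝ, μ] a) x - a x = ∫ z, k z * (a (x - z) - a x) ∂μ := by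
    have hint : Integrable (fun z => k z * a (x - z)) μ :=
      hkc.convolutionExists_left (lsmul ℝ ℝ) hk hloc x
    simp only [mul_sub]
    rw [integral_sub hint (hki.mul_const _), integral_mul_const, hk1, one_mul]
    rfl
  simp only [hdiff]
  exact eLpNorm_integral_mul_le hp hp' hki ((aestronglyMeasurable_comp_sub ha.1).sub ha.1.comp_fst)
    hε

lemma tendstoLp_convolution {k : ι → E → ℝ} {C : ℝ≥0∞} (hp : 1 ≤ p) (hp' : p ≠ ⊤)
    (hk : ∀ i, Continuous (k i)) (hkc : ∀ i, HasCompactSupport (k i))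
    (hk1 : ∀ i, ∫ z, k i z ∂μ = 1) (hkC : ∀ i, eLpNorm (k i) 1 μ ≤ C) (hC : C ≠ ⊤)
    (hsupp : Tendsto (fun i => Function.support (k i)) l (𝓝 0).smallSets) (ha : MemLp a p μ) :
    TendstoLp (fun i => k i ⋆[lsmul ℝ ℝ, μ] a) l a p μ := by
  refine ⟨fun i => memLp_convolution hp hp' ((hk i).integrable_of_hasCompactSupport (hkc i)) ha,
    ha, ?_⟩
  have htrans : Tendsto (fun z => eLpNorm (fun x => a (x - z) - a x) p μ) (𝓝 0) (𝓝 0) := by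
    simp only [sub_eq_add_neg]
    exact (tendstoLp_comp_add hp hp' ha
      (by simpa using (continuous_neg (G := E)).tendsto 0)).tendsto
  rw [ENNReal.tendsto_nhds_zero] at htrans ⊢
  intro ε hε
  have hε' : 0 < ε / (C + 1) := ENNReal.div_pos hε.ne' (by simpa using hC)
  filter_upwards [tendsto_smallSets_iff.1 hsupp _ (htrans _ hε')] with i hi
  calc _ ≤ eLpNorm (k i) 1 μ * (ε / (C + 1)) :=
        eLpNorm_convolution_sub_le hp hp' (hk i) (hkc i) (hk1 i) ha fun z hz => hi hz
    _ ≤ (C + 1) * (ε / (C + 1)) := by gcongr; exact (hkC i).trans le_self_add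
    _ ≤ ε := ENNReal.mul_div_le

end Convolution

/-! ### Square integrability from a weak bound on the Laplacian -/

section TestConvolution

open ContinuousLinearMap (lsmul)

variable {φ h : E3 → ℝ}

lemma integrable_mul_isTest {Ω : Set E3} (hh : LocallyIntegrable h volume) (hφ : IsTest Ω φ) :
    Integrable (fun x => h x * φ x) volume := by
  simpa only [smul_eq_mul, mul_comm] using
    hh.integrable_smul_left_of_hasCompactSupport hφ.continuous hφ.hasCompactSupport

lemma contDiff_convolution (hφ : IsTest univ φ) (hh : LocallyIntegrable h volume) :
    ContDiff ℝ ∞ (φ ⋆[lsmul ℝ ℝ, volume] h) :=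
  hφ.hasCompactSupport.contDiff_convolution_left _ hφ.contDiff hh

lemma pd_convolution (hφ : IsTest univ φ) (hh : LocallyIntegrable h volume) (i : Fin 3) :
    pd (φ ⋆[lsmul ℝ ℝ, volume] h) i = pd φ i ⋆[lsmul ℝ ℝ, volume] h := by
  ext x
  have hint := (hφ.hasCompactSupport.fderiv ℝ).convolutionExists_left
    ((lsmul ℝ ℝ).precompL E3 : (E3 →L[ℝ] ℝ) →L[ℝ] ℝ →L[ℝ] E3 →L[ℝ] ℝ)
    (hφ.contDiff_one.continuous_fderiv one_ne_zero) hh x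
  rw [pd, (hφ.hasCompactSupport.hasFDerivAt_convolution_left (lsmul ℝ ℝ) hφ.contDiff_one hh
    x).fderiv]
  exact ContinuousLinearMap.integral_apply hint _

lemma lap_convolution (hφ : IsTest univ φ) (hh : LocallyIntegrable h volume) :
    lap (φ ⋆[lsmul ℝ ℝ, volume] h) = lap φ ⋆[lsmul ℝ ℝ, volume] h := by
  ext x
  simp only [lap, pd_convolution hφ hh, pd_convolution (hφ.pd _) hh,
    convolution_lsmul_swap, smul_eq_mul, Finset.sum_mul]
  refine (integral_finsetSum _ fun i _ => ?_).symm
  simpa only [mul_comm] using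
    integrable_mul_isTest hh (((hφ.pd i).pd i).comp_const_sub x)

end TestConvolution

lemma lap_comp_const_sub {f : E3 → ℝ} (hf : ContDiff ℝ ∞ f) (x y : E3) :
    lap (fun z => f (x - z)) y = lap f (x - y) := by
  have hdiff (i : Fin 3) : Differentiable ℝ (pd f i) :=
    (contDiff_pd hf i).differentiable (by simp)
  have hpd (i : Fin 3) : pd (fun z => f (x - z)) i = fun z => -1 * pd f i (x - z) := by
    ext z
    rw [pd_comp_const_sub (hf.differentiable (by simp)), neg_one_mul]
  refine Finset.sum_congr rfl fun i _ => ?_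
  rw [hpd, pd_const_mul (f := fun z => pd f i (x - z))
    ((hdiff i _).comp y (differentiableAt_id.const_sub x)), pd_comp_const_sub (hdiff i)]
  ring

lemma lap_sq {k : E3 → ℝ} (hk : ContDiff ℝ ∞ k) (x : E3) :
    lap (fun y => k y * k y) x = 2 * (k x * lap k x) + 2 * ∑ i, pd k i x ^ 2 := by
  have hdiff : Differentiable ℝ k := hk.differentiable (by simp)
  have hdiff' (i : Fin 3) : Differentiable ℝ (pd k i) :=
    (contDiff_pd hk i).differentiable (by simp)
  have hpd (i : Fin 3) : pd (fun y => k y * k y) i = fun y => 2 * (k y * pd k i y) := by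
    ext y
    rw [pd_mul (hdiff y) (hdiff y)]
    ring
  simp only [lap, hpd, Finset.mul_sum, ← Finset.sum_add_distrib]
  refine Finset.sum_congr rfl fun i _ => ?_
  rw [pd_const_mul (f := fun y => k y * pd k i y) ((hdiff x).mul (hdiff' i x)),
    pd_mul (hdiff x) (hdiff' i x)]
  ring

/-- Caccioppoli: testing `Δ(k²) = 2|∇k|²` with cutoffs leaves only `∫ k² Δχₙ → 0`. -/
lemma pd_eq_zero_of_lap_eq_zero {k : E3 → ℝ} (hk : ContDiff ℝ ∞ k) (hL2 : MemLp k 2 volume)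
    (hlap : ∀ x, lap k x = 0) (x : E3) (i : Fin 3) : pd k i x = 0 := by
  obtain ⟨χ, C, hχ⟩ := exists_isCutoffSeq
  have hsq : Integrable (fun x => k x * k x) volume := hL2.integrable_mul hL2
  have hcont : Continuous fun x => ∑ i, pd k i x ^ 2 := by
    have := fun i => (contDiff_pd hk i).continuous
    fun_prop
  have hnonneg (x : E3) : 0 ≤ ∑ i, pd k i x ^ 2 := Finset.sum_nonneg fun i _ => sq_nonneg _
  have henergy (n : ℕ) : ∫ x, (∑ i, pd k i x ^ 2) * χ n x = 2⁻¹ * ∫ x, k x * k x * lap (χ n) x := by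
    rw [integral_mul_lap_comm (hk.mul hk) (hχ.isTest n), ← integral_const_mul]
    refine integral_congr_ae (Eventually.of_forall fun x => ?_)
    simp only [lap_sq hk, hlap]
    ring
  have hdecay : Tendsto (fun n => ∫ x, (∑ i, pd k i x ^ 2) * χ n x) atTop (𝓝 0) := by
    simpa only [henergy, mul_zero] using (hχ.tendsto_integral_mul_lap hsq).const_mul 2⁻¹
  have hzero := hχ.ae_eq_zero_of_tendsto_integral_mul hcont.aestronglyMeasurable hnonneg
    (fun n => (hcont.mul (hχ.isTest n).continuous).integrable_of_hasCompactSupport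
      (hχ.isTest n).hasCompactSupport.mul_left) hdecay
  have hx : ∑ i, pd k i x ^ 2 = 0 :=
    congrFun (hcont.ae_eq_iff_eq volume continuous_const |>.1 hzero) x
  exact pow_eq_zero_iff two_ne_zero |>.1
    ((Finset.sum_eq_zero_iff_of_nonneg fun i _ => sq_nonneg _).1 hx i (Finset.mem_univ i))

lemma eq_zero_of_lap_eq_zero {k : E3 → ℝ} (hk : ContDiff ℝ ∞ k) (hL2 : MemLp k 2 volume)
    (hlap : ∀ x, lap k x = 0) (x : E3) : k x = 0 := by
  have hfderiv (y : E3) : fderiv ℝ k y = 0 := by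
    ext v
    simp [fderiv_apply_eq_sum_pd, pd_eq_zero_of_lap_eq_zero hk hL2 hlap]
  have hconst : k = fun _ => k x :=
    funext fun y => is_const_of_fderiv_eq_zero (hk.differentiable (by simp)) hfderiv y x
  rw [hconst, memLp_const_iff two_ne_zero ENNReal.ofNat_ne_top] at hL2
  simpa using hL2

section WeakLiouville

open ContinuousLinearMap (lsmul)

lemma memLp_two_convolution_sub {φ f g : E3 → ℝ} (hφ : IsTest univ φ) (hf : Integrable f volume)
    (hg : MemLp g 2 volume) : MemLp (φ ⋆[lsmul ℝ ℝ, volume] fun x => f x - g x) 2 volume := by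
  have hint {k : E3 → ℝ} (hk : LocallyIntegrable k volume) (x : E3) :
      Integrable (fun t => φ (x - t) * k t) volume := by
    simpa only [mul_comm] using integrable_mul_isTest hk (hφ.comp_const_sub x)
  have hsub : (φ ⋆[lsmul ℝ ℝ, volume] fun x => f x - g x)
      = (f ⋆[lsmul ℝ ℝ, volume] φ) - (φ ⋆[lsmul ℝ ℝ, volume] g) := by
    ext x
    rw [Pi.sub_apply, convolution_lsmul_swap, convolution_lsmul, convolution_lsmul_swap]
    simp only [smul_eq_mul, mul_sub, mul_comm (f _)]
    exact integral_sub (hint hf.locallyIntegrable x) (hint (hg.locallyIntegrable (by norm_num)) x)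
  rw [hsub]
  exact (memLp_convolution (by norm_num) (by norm_num) hf (hφ.memLp 2)).sub
    (memLp_convolution (by norm_num) (by norm_num) hφ.integrable hg)

lemma ae_eq_of_forall_integral_mul_lap_eq {f g : E3 → ℝ} (hf : Integrable f volume)
    (hg : MemLp g 2 volume)
    (h : ∀ ψ, IsTest univ ψ → ∫ x, f x * lap ψ x = ∫ x, g x * lap ψ x) : f =ᵐ[volume] g := by
  have hfl : LocallyIntegrable f volume := hf.locallyIntegrable
  have hgl : LocallyIntegrable g volume := hg.locallyIntegrable (by norm_num)
  have hdl : LocallyIntegrable (fun x => f x - g x) volume := hfl.sub hgl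
  have hharmonic (φ : E3 → ℝ) (hφ : IsTest univ φ) (x : E3) :
      lap (φ ⋆[lsmul ℝ ℝ, volume] fun x => f x - g x) x = 0 := by
    have hφx := hφ.comp_const_sub x
    rw [lap_convolution hφ hdl, convolution_lsmul_swap]
    simp only [smul_eq_mul, ← lap_comp_const_sub hφ.contDiff x, mul_comm (lap _ _), sub_mul]
    rw [integral_sub (integrable_mul_isTest hfl hφx.lap) (integrable_mul_isTest hgl hφx.lap),
      h _ hφx, sub_self]
  have hzero : (fun x => f x - g x) =ᵐ[volume] 0 := by
    refine ae_eq_zero_of_integral_contDiff_smul_eq_zero hdl fun φ hφ hφc => ?_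
    have hφt : IsTest univ φ := ⟨hφ, hφc, subset_univ _⟩
    have hneg := hφt.comp_const_sub 0
    have := eq_zero_of_lap_eq_zero (contDiff_convolution hneg hdl)
      (memLp_two_convolution_sub hneg hf hg)
      (hharmonic _ hneg) 0
    rw [convolution_lsmul_swap] at this
    simpa using this
  filter_upwards [hzero] with x hx using sub_eq_zero.1 hx

end WeakLiouville

lemma exists_inner_eq_of_abs_le_mul_norm {V H : Type*} [AddCommGroup V] [Module ℝ V]
    [NormedAddCommGroup H] [InnerProductSpace ℝ H] [CompleteSpace H] (T : V →ₗ[ℝ] H)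
    (f : V →ₗ[ℝ] ℝ) (A : ℝ) (hA : ∀ v, |f v| ≤ A * ‖T v‖) :
    ∃ w : H, ∀ v, f v = inner ℝ w (T v) := by
  obtain ⟨s, hs⟩ := T.rangeRestrict.exists_rightInverse_of_surjective T.range_rangeRestrict
  have hTs (r : LinearMap.range T) : T (s r) = r :=
    congrArg Subtype.val (LinearMap.congr_fun hs r)
  have hfs (v : V) : f (s (T.rangeRestrict v)) = f v := by
    have h := hA (s (T.rangeRestrict v) - v)
    rw [map_sub T, hTs] at h
    simpa [sub_eq_zero] using h
  obtain ⟨F, hF, -⟩ := _root_.exists_extension_norm_eq (𝕜 := ℝ) (LinearMap.range T)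
    ((f ∘ₗ s).mkContinuous A fun r => by simpa [hTs] using hA (s r))
  refine ⟨(InnerProductSpace.toDual ℝ H).symm F, fun v => ?_⟩
  rw [InnerProductSpace.toDual_symm_apply, ← hfs v]
  exact (hF (T.rangeRestrict v)).symm

lemma lap_add {f g : E3 → ℝ} (hf : ContDiff ℝ ∞ f) (hg : ContDiff ℝ ∞ g) :
    lap (f + g) = lap f + lap g := by
  have hpd (i : Fin 3) : pd (f + g) i = pd f i + pd g i :=
    funext fun x => pd_add (hf.differentiable (by simp) x) (hg.differentiable (by simp) x) i
  ext x
  simp only [lap, hpd, Pi.add_apply, ← Finset.sum_add_distrib]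
  exact Finset.sum_congr rfl fun i _ => pd_add ((contDiff_pd hf i).differentiable (by simp) x)
    ((contDiff_pd hg i).differentiable (by simp) x) i

lemma lap_smul {f : E3 → ℝ} (hf : ContDiff ℝ ∞ f) (c : ℝ) : lap (c • f) = c • lap f := by
  have hpd (i : Fin 3) : pd (c • f) i = c • pd f i :=
    funext fun x => pd_const_mul (hf.differentiable (by simp) x) c i
  ext x
  simp only [lap, hpd, Pi.smul_apply, smul_eq_mul, Finset.mul_sum]
  exact Finset.sum_congr rfl fun i _ =>
    pd_const_mul ((contDiff_pd hf i).differentiable (by simp) x) c i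

/-- The space `C_c^∞(ℝ³)`. -/
def testFunctions : Submodule ℝ (E3 → ℝ) where
  carrier := {f | IsTest univ f}
  add_mem' hf hg := hf.add hg
  zero_mem' := ⟨contDiff_const, HasCompactSupport.zero, subset_univ _⟩
  smul_mem' c _ hf := hf.const_mul c

/-- The Laplacian of test functions, as a linear map into the Hilbert space `L²`. -/
def lapToLp : testFunctions →ₗ[ℝ] Lp ℝ 2 (volume : Measure E3) where
  toFun ψ := (ψ.2.lap.memLp 2).toLp _
  map_add' ψ φ := by
    rw [← MemLp.toLp_add]
    simp only [Submodule.coe_add, lap_add ψ.2.contDiff φ.2.contDiff]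
  map_smul' c ψ := by
    rw [RingHom.id_apply, ← MemLp.toLp_const_smul]
    simp only [Submodule.coe_smul, lap_smul ψ.2.contDiff]

/-- The distribution `Δp`, as a linear functional on test functions. -/
def weakLap (p : E3 → ℝ) (hp : LocallyIntegrable p volume) : testFunctions →ₗ[ℝ] ℝ where
  toFun ψ := ∫ x, p x * lap ψ.1 x
  map_add' ψ φ := by
    rw [← integral_add (integrable_mul_isTest hp ψ.2.lap) (integrable_mul_isTest hp φ.2.lap)]
    simp only [Submodule.coe_add, lap_add ψ.2.contDiff φ.2.contDiff, Pi.add_apply, mul_add]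
  map_smul' c ψ := by
    rw [RingHom.id_apply, smul_eq_mul, ← integral_const_mul]
    simp only [Submodule.coe_smul, lap_smul ψ.2.contDiff, Pi.smul_apply, smul_eq_mul,
      mul_left_comm]

lemma memLp_two_of_forall_abs_integral_mul_lap_le {p : E3 → ℝ} (hp : Integrable p volume) (A : ℝ)
    (hA : ∀ ψ, IsTest univ ψ → |∫ x, p x * lap ψ x| ≤ A * (eLpNorm (lap ψ) 2 volume).toReal) :
    MemLp p 2 volume := by
  obtain ⟨w, hw⟩ := exists_inner_eq_of_abs_le_mul_norm lapToLp (weakLap p hp.locallyIntegrable) A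
    fun ψ => (hA ψ.1 ψ.2).trans_eq (by rw [lapToLp, LinearMap.coe_mk, AddHom.coe_mk, Lp.norm_toLp])
  refine (Lp.memLp w).ae_eq (ae_eq_of_forall_integral_mul_lap_eq hp (Lp.memLp w)
    fun ψ hψ => (hw ⟨ψ, hψ⟩).trans ?_).symm
  rw [L2.inner_def]
  refine integral_congr_ae ?_
  filter_upwards [(hψ.lap.memLp 2).coeFn_toLp] with x hx
  exact (congrArg (inner ℝ (w x)) hx).trans (mul_comm _ _)

/-! ### Homogeneous Sobolev functions and their difference quotients -/

/-- The homogeneous Sobolev space `D₀^{1,q}(ℝ³)`: `U` with gradient `D` is a limit of test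
functions, the functions converging in `L^p` and their gradients in `L^q`. -/
def MemD01 (p q : ℝ≥0∞) (U : E3 → ℝ) (D : Fin 3 → E3 → ℝ) : Prop :=
  ∃ v : ℕ → E3 → ℝ, (∀ n, IsTest univ (v n)) ∧ TendstoLp v atTop U p volume ∧
    ∀ j, TendstoLp (fun n => pd (v n) j) atTop (D j) q volume

lemma eLpNorm_sum_mul_le {q : ℝ≥0∞} (hq : 1 ≤ q) (h : E3) {f : Fin 3 → E3 → ℝ}
    (hf : ∀ j, AEStronglyMeasurable (f j) volume) :
    eLpNorm (fun x => ∑ j, h j * f j x) q volume ≤ ‖h‖ₑ * ∑ j, eLpNorm (f j) q volume := by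
  have hsum : (fun x => ∑ j, h j * f j x) = ∑ j, h j • f j := by
    ext x
    simp
  rw [hsum, Finset.mul_sum]
  refine (eLpNorm_sum_le (fun j _ => (hf j).const_smul (h j)) hq).trans
    (Finset.sum_le_sum fun j _ => ?_)
  rw [eLpNorm_const_smul]
  gcongr
  exact enorm_le_iff_norm_le.2 (PiLp.norm_apply_le h j)

lemma shift_sub_sub_eq_integral {v : E3 → ℝ} (hv : IsTest univ v) (x h : E3) :
    v (x + h) - v x - ∑ j, h j * pd v j x
      = ∫ t : ℝ, (Ioc (0 : ℝ) 1).indicator 1 t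
        * ∑ j, h j * (pd v j (x + t • h) - pd v j x) := by
  have hderiv (t : ℝ) : HasDerivAt (fun s : ℝ => v (x + s • h) - s * ∑ j, h j * pd v j x)
      (∑ j, h j * (pd v j (x + t • h) - pd v j x)) t := by
    have hline : HasDerivAt (fun s : ℝ => x + s • h) h t := by
      simpa using ((hasDerivAt_id t).smul_const h).const_add x
    have hcomp := (hv.differentiable (x + t • h)).hasFDerivAt.comp_hasDerivAt t hline
    refine (hcomp.sub ((hasDerivAt_id t).mul_const (∑ j, h j * pd v j x))).congr_deriv ?_
    simp only [fderiv_apply_eq_sum_pd, mul_sub, Finset.sum_sub_distrib, one_mul]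
  have hcont : Continuous fun t : ℝ => ∑ j, h j * (pd v j (x + t • h) - pd v j x) := by
    have := fun j => (hv.pd j).continuous
    fun_prop
  have hftc := intervalIntegral.integral_eq_sub_of_hasDerivAt (fun t _ => hderiv t)
    (hcont.intervalIntegrable 0 1)
  simp only [one_smul, one_mul, zero_smul, add_zero, zero_mul, sub_zero] at hftc
  rw [sub_right_comm, ← hftc, intervalIntegral.integral_of_le zero_le_one,
    ← integral_indicator measurableSet_Ioc]
  refine integral_congr_ae (Eventually.of_forall fun t => ?_)
  by_cases ht : t ∈ Ioc (0 : ℝ) 1 <;> simp [ht]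

lemma eLpNorm_shift_sub_sub_le_of_isTest {q : ℝ≥0∞} (hq : 1 ≤ q) (hq' : q ≠ ⊤) {v : E3 → ℝ}
    (hv : IsTest univ v) {h : E3} {ε : ℝ≥0∞}
    (hε : ∀ t ∈ Icc (0 : ℝ) 1, ∑ j, eLpNorm (fun x => pd v j (x + t • h) - pd v j x) q volume ≤ ε) :
    eLpNorm (fun x => v (x + h) - v x - ∑ j, h j * pd v j x) q volume ≤ ‖h‖ₑ * ε := by
  have hcont (j : Fin 3) : Continuous (pd v j) := (hv.pd j).continuous
  have hmass : eLpNorm ((Ioc (0 : ℝ) 1).indicator (1 : ℝ → ℝ)) 1 volume = 1 := by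
    simp [Pi.one_def, eLpNorm_indicator_const measurableSet_Ioc]
  simp only [shift_sub_sub_eq_integral hv]
  refine (eLpNorm_integral_mul_le (C := ‖h‖ₑ * ε)
    (F := fun x t => ∑ j, h j * (pd v j (x + t • h) - pd v j x)) hq hq' ?_ ?_ ?_).trans_eq ?_
  · exact (integrable_indicator_iff measurableSet_Ioc).2 (integrableOn_const (by simp))
  · refine Continuous.aestronglyMeasurable ?_
    simp only [Function.uncurry_def]
    fun_prop
  · intro t ht
    have ht : t ∈ Icc (0 : ℝ) 1 := Ioc_subset_Icc_self (mem_of_indicator_ne_zero ht)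
    refine (eLpNorm_sum_mul_le hq h fun j => ?_).trans (by gcongr; exact hε t ht)
    exact (by fun_prop : Continuous _).aestronglyMeasurable
  · rw [hmass, one_mul]

lemma eLpNorm_shift_sub_sub_le_of_isTest_of_grad {q : ℝ≥0∞} (hq : 1 ≤ q) (hq' : q ≠ ⊤)
    {v : E3 → ℝ} (hv : IsTest univ v) {D : Fin 3 → E3 → ℝ}
    (hD : ∀ j, AEStronglyMeasurable (D j) volume) {h : E3} {ε : ℝ≥0∞}
    (hε : ∀ t ∈ Icc (0 : ℝ) 1, ∑ j, eLpNorm (fun x => D j (x + t • h) - D j x) q volume ≤ ε) :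
    eLpNorm (fun x => v (x + h) - v x - ∑ j, h j * D j x) q volume
      ≤ ‖h‖ₑ * (ε + 3 * ∑ j, eLpNorm (fun x => pd v j x - D j x) q volume) := by
  set δ : Fin 3 → ℝ≥0∞ := fun j => eLpNorm (fun x => pd v j x - D j x) q volume
  have hcont (j : Fin 3) : Continuous (pd v j) := (hv.pd j).continuous
  have hdiff (j : Fin 3) : AEStronglyMeasurable (fun x => pd v j x - D j x) volume :=
    (hcont j).aestronglyMeasurable.sub (hD j)
  have htest : eLpNorm (fun x => v (x + h) - v x - ∑ j, h j * pd v j x) q volume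
      ≤ ‖h‖ₑ * (ε + 2 * ∑ j, δ j) := by
    refine eLpNorm_shift_sub_sub_le_of_isTest hq hq' hv fun t ht => ?_
    refine (Finset.sum_le_sum fun j _ => eLpNorm_comp_add_right_sub_le hq
      (hcont j).aestronglyMeasurable (hD j) (t • h)).trans ?_
    rw [Finset.sum_add_distrib, ← Finset.mul_sum]
    gcongr
    exact hε t ht
  have hsplit : (fun x => v (x + h) - v x - ∑ j, h j * D j x)
      = (fun x => v (x + h) - v x - ∑ j, h j * pd v j x)
        + fun x => ∑ j, h j * (pd v j x - D j x) := by
    ext x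
    simp only [Pi.add_apply, mul_sub, Finset.sum_sub_distrib]
    ring
  rw [hsplit]
  refine (eLpNorm_add_le ?_ ?_ hq).trans
    ((add_le_add htest (eLpNorm_sum_mul_le hq h hdiff)).trans_eq ?_)
  · have := hv.continuous
    exact (by fun_prop : Continuous _).aestronglyMeasurable
  · fun_prop
  · ring

namespace MemD01

variable {p q : ℝ≥0∞} {U : E3 → ℝ} {D : Fin 3 → E3 → ℝ}

lemma memLp (hU : MemD01 p q U D) : MemLp U p volume :=
  let ⟨_, _, hv, _⟩ := hU
  hv.memLp_lim

lemma memLp_grad (hU : MemD01 p q U D) (j : Fin 3) : MemLp (D j) q volume :=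
  let ⟨_, _, _, hD⟩ := hU
  (hD j).memLp_lim

lemma eLpNorm_shift_sub_sub_le (hp : 1 ≤ p) (hq : 1 ≤ q) (hq' : q ≠ ⊤) (hU : MemD01 p q U D)
    {h : E3} {ε : ℝ≥0∞}
    (hε : ∀ t ∈ Icc (0 : ℝ) 1, ∑ j, eLpNorm (fun x => D j (x + t • h) - D j x) q volume ≤ ε) :
    eLpNorm (fun x => U (x + h) - U x - ∑ j, h j * D j x) q volume ≤ ‖h‖ₑ * ε := by
  obtain ⟨v, hv, hvU, hvD⟩ := hU
  set δ : ℕ → ℝ≥0∞ := fun n => ∑ j, eLpNorm (fun x => pd (v n) j x - D j x) q volume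
  have hδ0 : Tendsto δ atTop (𝓝 0) := by
    simpa using tendsto_finsetSum Finset.univ fun j _ => (hvD j).tendsto
  have hbound (n : ℕ) : eLpNorm (fun x => v n (x + h) - v n x - ∑ j, h j * D j x) q volume
      ≤ ‖h‖ₑ * (ε + 3 * δ n) :=
    eLpNorm_shift_sub_sub_le_of_isTest_of_grad hq hq' (hv n) (fun j => (hvD j).memLp_lim.1) hε
  obtain ⟨ns, hns, hae⟩ := (tendstoInMeasure_of_tendsto_eLpNorm (one_pos.trans_le hp).ne'
    (fun n => (hvU.memLp n).1) hvU.memLp_lim.1 hvU.tendsto).exists_seq_tendsto_ae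
  have hae' := (measurePreserving_add_right volume h).quasiMeasurePreserving.ae hae
  have hDm : AEStronglyMeasurable (fun x => ∑ j, h j * D j x) volume := by
    have := fun j => (hvD j).memLp_lim.1
    fun_prop
  refine (Lp.eLpNorm_lim_le_liminf_eLpNorm
    (f := fun n x => v (ns n) (x + h) - v (ns n) x - ∑ j, h j * D j x) (fun n => ?_) _ ?_).trans ?_
  · have := (hv (ns n)).continuous
    exact (by fun_prop : Continuous fun x => v (ns n) (x + h) - v (ns n) x
      ).aestronglyMeasurable.sub hDm
  · filter_upwards [hae, hae'] with x hx hxh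
    exact (hxh.sub hx).sub_const _
  · have hlim : Tendsto (fun n => ‖h‖ₑ * (ε + 3 * δ (ns n))) atTop (𝓝 (‖h‖ₑ * ε)) := by
      have h3 := ENNReal.Tendsto.const_mul (a := 3) (hδ0.comp hns.tendsto_atTop)
        (Or.inr (by norm_num))
      simpa using ENNReal.Tendsto.const_mul (a := ‖h‖ₑ) (h3.const_add ε) (Or.inr (by simp))
    exact (liminf_le_liminf (Eventually.of_forall fun n => hbound (ns n))).trans_eq hlim.liminf_eq

lemma eLpNorm_shift_sub_le (hp : 1 ≤ p) (hq : 1 ≤ q) (hq' : q ≠ ⊤) (hU : MemD01 p q U D)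
    (h : E3) :
    eLpNorm (fun x => U (x + h) - U x) q volume
      ≤ ‖h‖ₑ * (3 * ∑ j, eLpNorm (D j) q volume) := by
  have hD (j : Fin 3) : AEStronglyMeasurable (D j) volume := (hU.memLp_grad j).1
  have hU' : AEStronglyMeasurable (fun x => U (x + h)) volume :=
    hU.memLp.1.comp_quasiMeasurePreserving
      (measurePreserving_add_right volume h).quasiMeasurePreserving
  have hlin : AEStronglyMeasurable (fun x => ∑ j, h j * D j x) volume := by fun_prop
  have hε (t : ℝ) : ∑ j, eLpNorm (fun x => D j (x + t • h) - D j x) q volume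
      ≤ 2 * ∑ j, eLpNorm (D j) q volume := by
    rw [Finset.mul_sum]
    gcongr with j
    simpa using eLpNorm_comp_add_right_sub_le (g := 0) hq (hD j)
      aestronglyMeasurable_zero (t • h)
  have hsplit : (fun x => U (x + h) - U x)
      = (fun x => U (x + h) - U x - ∑ j, h j * D j x) + fun x => ∑ j, h j * D j x := by
    ext x
    simp
  rw [hsplit]
  refine (eLpNorm_add_le ((hU'.sub hU.memLp.1).sub hlin) hlin hq).trans
    ((add_le_add (hU.eLpNorm_shift_sub_sub_le hp hq hq' fun t _ => hε t)
      (eLpNorm_sum_mul_le hq h hD)).trans_eq ?_)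
  ring

lemma eventually_eLpNorm_shift_sub_sub_le (hp : 1 ≤ p) (hq : 1 ≤ q) (hq' : q ≠ ⊤)
    (hU : MemD01 p q U D) {δ : ℝ≥0∞} (hδ : 0 < δ) :
    ∀ᶠ h in 𝓝 (0 : E3),
      eLpNorm (fun x => U (x + h) - U x - ∑ j, h j * D j x) q volume ≤ ‖h‖ₑ * δ := by
  have hmod : Tendsto (fun h => ∑ j, eLpNorm (fun x => D j (x + h) - D j x) q volume)
      (𝓝 0) (𝓝 0) := by
    simpa using tendsto_finsetSum Finset.univ fun j _ =>
      (tendstoLp_comp_add hq hq' (hU.memLp_grad j) tendsto_id).tendsto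
  obtain ⟨r, hr, hball⟩ := Metric.eventually_nhds_iff_ball.1
    (ENNReal.tendsto_nhds_zero.1 hmod δ hδ)
  filter_upwards [ball_mem_nhds 0 hr] with h hh
  refine hU.eLpNorm_shift_sub_sub_le hp hq hq' fun t ht => hball _ ?_
  exact (convex_ball 0 r).smul_mem_of_zero_mem (mem_ball_self hr) hh ht

lemma eventually_eLpNorm_mul_shift_sub_sub_le {P r : ℝ≥0∞} [ENNReal.HolderTriple P q r]
    (hp : 1 ≤ p) (hq : 1 ≤ q) (hq' : q ≠ ⊤) (hP : 1 ≤ P) (hP' : P ≠ ⊤) (hr : 1 ≤ r)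
    (hU : MemD01 p q U D) {a : E3 → ℝ} (ha : MemLp a P volume) {δ : ℝ≥0∞} (hδ : 0 < δ) :
    ∀ᶠ h in 𝓝 (0 : E3), eLpNorm (fun x => a (x + h) * (U (x + h) - U x)
      - a x * ∑ j, h j * D j x) r volume ≤ ‖h‖ₑ * δ := by
  set A : ℝ≥0∞ := eLpNorm a P volume
  set S : ℝ≥0∞ := ∑ j, eLpNorm (D j) q volume
  have hDm (j : Fin 3) : AEStronglyMeasurable (D j) volume := (hU.memLp_grad j).1
  have hS : S ≠ ⊤ := ENNReal.sum_ne_top.2 fun j _ => (hU.memLp_grad j).2.ne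
  have hδ2 : δ / 2 ≠ 0 := (ENNReal.half_pos hδ.ne').ne'
  have ha0 := ENNReal.tendsto_nhds_zero.1 (tendstoLp_comp_add hP hP' ha tendsto_id).tendsto
    (δ / 2 / S) (ENNReal.div_pos hδ2 hS)
  filter_upwards [ha0, hU.eventually_eLpNorm_shift_sub_sub_le hp hq hq'
    (ENNReal.div_pos hδ2 ha.2.ne)] with h hah hUh
  have hshift := (measurePreserving_add_right volume h).quasiMeasurePreserving
  have ham : AEStronglyMeasurable (fun x => a (x + h)) volume :=
    ha.1.comp_quasiMeasurePreserving hshift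
  have hUm : AEStronglyMeasurable (fun x => U (x + h)) volume :=
    hU.memLp.1.comp_quasiMeasurePreserving hshift
  have hlin : AEStronglyMeasurable (fun x => ∑ j, h j * D j x) volume := by fun_prop
  have hrem := (hUm.sub hU.memLp.1).sub hlin
  have hsplit : (fun x => a (x + h) * (U (x + h) - U x) - a x * ∑ j, h j * D j x)
      = (fun x => a (x + h) * (U (x + h) - U x - ∑ j, h j * D j x))
        + fun x => (a (x + h) - a x) * ∑ j, h j * D j x := by
    ext x
    simp only [Pi.add_apply]
    ring
  rw [hsplit]
  refine (eLpNorm_add_le (ham.mul hrem) ((ham.sub ha.1).mul hlin) hr).trans ?_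
  calc _ ≤ A * (‖h‖ₑ * (δ / 2 / A)) + δ / 2 / S * (‖h‖ₑ * S) := by
        refine add_le_add ((eLpNorm_fun_mul_le (p := P) (q := q) ham hrem).trans ?_)
          ((eLpNorm_fun_mul_le (p := P) (q := q) (ham.sub ha.1) hlin).trans ?_)
        · rw [eLpNorm_comp_add_right ha.1]
          exact mul_le_mul' le_rfl hUh
        · exact mul_le_mul' hah (eLpNorm_sum_mul_le hq h hDm)
    _ = ‖h‖ₑ * (A * (δ / 2 / A) + S * (δ / 2 / S)) := by ring
    _ ≤ ‖h‖ₑ * (δ / 2 + δ / 2) := by gcongr <;> exact ENNReal.mul_div_le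
    _ = ‖h‖ₑ * δ := by rw [ENNReal.add_halves]

end MemD01

/-! ### Mollification and the Friedrichs commutator -/

section Commutator

open ContinuousLinearMap (lsmul)

/-- Mollifiers: nonnegative test functions of integral `1` supported in balls of radius `r n → 0`,
with gradients of size at most `C / r n` in `L¹`. -/
structure IsMollifierSeq (k : ℕ → E3 → ℝ) (r : ℕ → ℝ≥0) (C : ℝ≥0) : Prop where
  isTest : ∀ n, IsTest univ (k n)
  nonneg : ∀ n z, 0 ≤ k n z
  integral_eq_one : ∀ n, ∫ z, k n z = 1
  tendsto_radius : Tendsto r atTop (𝓝 0)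
  tsupport_subset : ∀ n, tsupport (k n) ⊆ closedBall 0 (r n)
  eLpNorm_pd_mul_le : ∀ n i, eLpNorm (pd (k n) i) 1 volume * r n ≤ C

lemma eLpNorm_one_comp_smul {f : E3 → ℝ} (hf : Integrable f volume) {c : ℝ} (hc : 0 < c) :
    eLpNorm (fun z => f (c • z)) 1 volume = ENNReal.ofReal (c ^ 3)⁻¹ * eLpNorm f 1 volume := by
  have hnorm {g : E3 → ℝ} (hg : Integrable g volume) :
      eLpNorm g 1 volume = ENNReal.ofReal (∫ z, ‖g z‖) := by
    rw [eLpNorm_one_eq_lintegral_enorm, ofReal_integral_norm_eq_lintegral_enorm hg]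
  rw [hnorm (hf.comp_smul hc.ne'), hnorm hf,
    Measure.integral_comp_smul volume (fun z => ‖f z‖) c, finrank_euclideanSpace_fin, smul_eq_mul,
    ENNReal.ofReal_mul (by positivity), abs_of_pos (by positivity)]

lemma eLpNorm_pd_rescale {θ : E3 → ℝ} (hθ : IsTest univ θ) {c : ℝ} (hc : 0 < c) (i : Fin 3) :
    eLpNorm (pd (fun z => c ^ 3 * θ (c • z)) i) 1 volume
      = ENNReal.ofReal c * eLpNorm (pd θ i) 1 volume := by
  have hpd : pd (fun z => c ^ 3 * θ (c • z)) i = (c ^ 3 * c) • fun z => pd θ i (c • z) := by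
    ext z
    rw [pd_const_mul ((hθ.comp_smul hc.ne').differentiable z), pd_comp_smul hθ.differentiable,
      ← mul_assoc]
    rfl
  rw [hpd, eLpNorm_const_smul, eLpNorm_one_comp_smul (hθ.pd i).integrable hc, ← mul_assoc,
    Real.enorm_of_nonneg (by positivity), ← ENNReal.ofReal_mul (by positivity)]
  congr 2
  field_simp

lemma exists_isMollifierSeq : ∃ k r C, IsMollifierSeq k r C := by
  let b : ContDiffBump (0 : E3) := ⟨1, 2, by norm_num, by norm_num⟩
  let θ : E3 → ℝ := b.normed volume
  have hθ : IsTest univ θ := ⟨b.contDiff_normed, b.hasCompactSupport_normed, subset_univ _⟩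
  let c : ℕ → ℝ≥0 := fun n => n + 1
  have hc (n : ℕ) : 0 < c n := by positivity
  have hc' (n : ℕ) : (0 : ℝ) < c n := hc n
  let M : ℝ≥0 := ∑ i, (eLpNorm (pd θ i) 1 volume).toNNReal
  have hM (i : Fin 3) : eLpNorm (pd θ i) 1 volume ≤ M := by
    rw [← ENNReal.coe_toNNReal ((hθ.pd i).memLp 1).2.ne]
    exact ENNReal.coe_le_coe.2 (Finset.single_le_sum
      (f := fun i => (eLpNorm (pd θ i) 1 volume).toNNReal) (fun _ _ => zero_le)
      (Finset.mem_univ i))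
  refine ⟨fun n z => (c n : ℝ) ^ 3 * θ ((c n : ℝ) • z), fun n => 2 * (c n)⁻¹, 2 * M,
    fun n => (hθ.comp_smul (hc' n).ne').const_mul _,
    fun n z => mul_nonneg (by positivity) (b.nonneg_normed _), fun n => ?_, ?_, fun n => ?_,
    fun n i => ?_⟩
  · rw [integral_const_mul, Measure.integral_comp_smul volume θ, finrank_euclideanSpace_fin,
      b.integral_normed, abs_of_pos (by positivity), smul_eq_mul, mul_one,
      mul_inv_cancel₀ (by positivity)]
  · rw [← NNReal.tendsto_coe]
    simpa [c] using (tendsto_one_div_add_atTop_nhds_zero_nat (𝕜 := ℝ)).const_mul 2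
  · refine closure_minimal (fun z hz => ?_) isClosed_closedBall
    have hθz : (c n : ℝ) • z ∈ Function.support θ := fun h => hz (by simp [h])
    rw [b.support_normed_eq, mem_ball_zero_iff, norm_smul, NNReal.norm_eq] at hθz
    rw [mem_closedBall_zero_iff, NNReal.coe_mul, NNReal.coe_inv, ← div_eq_mul_inv,
      le_div_iff₀' (hc' n)]
    exact hθz.le
  · rw [eLpNorm_pd_rescale hθ (hc' n)]
    calc ENNReal.ofReal (c n) * eLpNorm (pd θ i) 1 volume * ↑(2 * (c n)⁻¹)
        ≤ c n * M * ↑(2 * (c n)⁻¹) := by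
          rw [ENNReal.ofReal_coe_nnreal]
          gcongr
          exact hM i
      _ = ↑(2 * M) := by
          norm_cast
          have := (hc n).ne'
          field_simp

lemma integral_coord_mul_pd {k : E3 → ℝ} (hk : IsTest univ k) (hk1 : ∫ z, k z = 1) (i j : Fin 3) :
    ∫ z : E3, z j * pd k i z = -if j = i then 1 else 0 := by
  let coord : E3 →L[ℝ] ℝ := EuclideanSpace.proj j
  have hcoord (z : E3) : pd coord i z = if j = i then 1 else 0 := by
    rw [pd, coord.fderiv]
    simp [coord]
  have hparts := integral_mul_pd_eq_neg coord.contDiff hk.contDiff_one hk.hasCompactSupport i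
  simp only [hcoord, integral_const_mul, hk1, mul_one] at hparts
  exact hparts

namespace IsMollifierSeq

variable {k : ℕ → E3 → ℝ} {r : ℕ → ℝ≥0} {C : ℝ≥0}

lemma tendsto_coe_radius (hk : IsMollifierSeq k r C) :
    Tendsto (fun n => (r n : ℝ)) atTop (𝓝 0) :=
  NNReal.tendsto_coe.2 hk.tendsto_radius

lemma eLpNorm_eq_one (hk : IsMollifierSeq k r C) (n : ℕ) : eLpNorm (k n) 1 volume = 1 := by
  rw [eLpNorm_one_eq_lintegral_enorm,
    ← ofReal_integral_norm_eq_lintegral_enorm (hk.isTest n).integrable]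
  simp only [Real.norm_of_nonneg (hk.nonneg n _), hk.integral_eq_one, ENNReal.ofReal_one]

lemma tendstoLp_convolution (hk : IsMollifierSeq k r C) {p : ℝ≥0∞} (hp : 1 ≤ p) (hp' : p ≠ ⊤)
    {a : E3 → ℝ} (ha : MemLp a p volume) :
    TendstoLp (fun n => k n ⋆[lsmul ℝ ℝ, volume] a) atTop a p volume := by
  refine _root_.tendstoLp_convolution hp hp' (fun n => (hk.isTest n).continuous)
    (fun n => (hk.isTest n).hasCompactSupport) hk.integral_eq_one
    (fun n => (hk.eLpNorm_eq_one n).le) ENNReal.one_ne_top ?_ ha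
  refine tendsto_smallSets_iff.2 fun s hs => ?_
  obtain ⟨ε, hε, hball⟩ := Metric.nhds_basis_closedBall.mem_iff.1 hs
  filter_upwards [hk.tendsto_coe_radius.eventually_le_const hε] with n hn
  exact (subset_tsupport _).trans
    ((hk.tsupport_subset n).trans ((closedBall_subset_closedBall hn).trans hball))

lemma enorm_le_of_pd_ne_zero (hk : IsMollifierSeq k r C) {n : ℕ} {i : Fin 3} {z : E3}
    (hz : pd (k n) i z ≠ 0) : ‖z‖ₑ ≤ r n := by
  have hzk : z ∈ tsupport (k n) := support_fderiv_subset ℝ fun h => hz (by simp [pd, h])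
  simpa [← ofReal_norm] using hk.tsupport_subset n hzk

end IsMollifierSeq

/-- Friedrichs' expression `∂ᵢ(k ⋆ (a U)) - U ∂ᵢ(k ⋆ a)` in which the derivatives of the mollifier
fall on differences of `U`. -/
def friedrichsCommutator (k a U : E3 → ℝ) (i : Fin 3) : E3 → ℝ :=
  fun x => ∫ z, pd k i z * (a (x - z) * (U (x - z) - U x))

section

variable {p q s P : ℝ≥0∞} {a U : E3 → ℝ} {D : Fin 3 → E3 → ℝ}

lemma integrable_isTest_mul_comp_sub {φ h : E3 → ℝ} (hφ : IsTest univ φ)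
    (hh : LocallyIntegrable h volume) (x : E3) :
    Integrable (fun z => φ z * h (x - z)) volume :=
  hφ.hasCompactSupport.convolutionExists_left (lsmul ℝ ℝ) hφ.continuous hh x

lemma friedrichsCommutator_eq_sub {k : E3 → ℝ} (hk : IsTest univ k)
    (ha : LocallyIntegrable a volume) (haU : LocallyIntegrable (fun x => a x * U x) volume)
    (i : Fin 3) (x : E3) :
    friedrichsCommutator k a U i x = (pd k i ⋆[lsmul ℝ ℝ, volume] fun y => a y * U y) x
      - U x * pd (k ⋆[lsmul ℝ ℝ, volume] a) i x := by
  rw [pd_convolution hk ha]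
  simp only [friedrichsCommutator, convolution_def, ContinuousLinearMap.lsmul_apply, smul_eq_mul]
  rw [← integral_const_mul, ← integral_sub (integrable_isTest_mul_comp_sub (hk.pd i) haU x)
    ((integrable_isTest_mul_comp_sub (hk.pd i) ha x).const_mul _)]
  congr 1 with z
  ring

lemma integrable_pd_mul_mul_sub {k : E3 → ℝ} (hk : IsTest univ k)
    (ha : LocallyIntegrable a volume) (haU : LocallyIntegrable (fun x => a x * U x) volume)
    (i : Fin 3) (x : E3) :
    Integrable (fun z => pd k i z * (a (x - z) * (U (x - z) - U x))) volume := by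
  refine ((integrable_isTest_mul_comp_sub (hk.pd i) haU x).sub
    ((integrable_isTest_mul_comp_sub (hk.pd i) ha x).const_mul (U x))).congr
    (Eventually.of_forall fun z => ?_)
  simp only [Pi.sub_apply]
  ring

lemma friedrichsCommutator_sub_eq_integral {k : E3 → ℝ} (hk : IsTest univ k) (hk1 : ∫ z, k z = 1)
    (ha : LocallyIntegrable a volume) (haU : LocallyIntegrable (fun x => a x * U x) volume)
    (i : Fin 3) (x : E3) :
    friedrichsCommutator k a U i x - a x * D i x
      = ∫ z, pd k i z * (a (x - z) * (U (x - z) - U x) - a x * ∑ j, (-z) j * D j x) := by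
  have hcoord (j : Fin 3) : Integrable (fun z : E3 => z j * pd k i z) volume :=
    (by have := (hk.pd i).continuous; fun_prop : Continuous _).integrable_of_hasCompactSupport
      (hk.pd i).hasCompactSupport.mul_left
  have hexpand (z : E3) : pd k i z * (a x * ∑ j, (-z) j * D j x)
      = ∑ j, -(a x * D j x) * (z j * pd k i z) := by
    simp only [Finset.mul_sum, PiLp.neg_apply]
    exact Finset.sum_congr rfl fun j _ => by ring
  have hlin : ∫ z, pd k i z * (a x * ∑ j, (-z) j * D j x) = a x * D i x := by
    simp only [hexpand]
    rw [integral_finsetSum _ fun j _ => (hcoord j).const_mul _]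
    simp only [integral_const_mul, integral_coord_mul_pd hk hk1]
    simp
  simp only [mul_sub (pd k i _) _ (a x * _)]
  rw [integral_sub (integrable_pd_mul_mul_sub hk ha haU i x), hlin, friedrichsCommutator]
  simp only [hexpand]
  exact integrable_finsetSum _ fun j _ => (hcoord j).const_mul _

lemma aestronglyMeasurable_mul_shift_sub (ha : AEStronglyMeasurable a volume)
    (hU : AEStronglyMeasurable U volume) :
    AEStronglyMeasurable (fun w : E3 × E3 => a (w.1 - w.2) * (U (w.1 - w.2) - U w.1))
      (volume.prod volume) :=
  (aestronglyMeasurable_comp_sub ha).mul ((aestronglyMeasurable_comp_sub hU).sub hU.comp_fst)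

namespace IsMollifierSeq

variable {k : ℕ → E3 → ℝ} {r : ℕ → ℝ≥0} {C : ℝ≥0} [ENNReal.HolderTriple P q s]

lemma memLp_friedrichsCommutator (hk : IsMollifierSeq k r C) (hp : 1 ≤ p) (hq : 1 ≤ q)
    (hq' : q ≠ ⊤) (hs : 1 ≤ s) (hs' : s ≠ ⊤) (hU : MemD01 p q U D) (ha : MemLp a P volume)
    (n : ℕ) (i : Fin 3) : MemLp (friedrichsCommutator (k n) a U i) s volume := by
  have hpd := (hk.isTest n).pd i
  have hF := aestronglyMeasurable_mul_shift_sub ha.1 hU.memLp.1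
  refine ⟨(hpd.continuous.aestronglyMeasurable.comp_snd.mul hF).integral_prod_right', ?_⟩
  set S : ℝ≥0∞ := ∑ j, eLpNorm (D j) q volume
  have hS : S ≠ ⊤ := ENNReal.sum_ne_top.2 fun j _ => (hU.memLp_grad j).2.ne
  refine (eLpNorm_integral_mul_le (C := eLpNorm a P volume * (r n * (3 * S))) hs hs'
    hpd.integrable hF fun z hz => ?_).trans_lt
    (ENNReal.mul_lt_top (hpd.memLp 1).2 (ENNReal.mul_lt_top ha.2 (by finiteness)))
  have hshift := (measurePreserving_add_right volume (-z)).quasiMeasurePreserving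
  simp only [sub_eq_add_neg _ z]
  refine (eLpNorm_fun_mul_le (p := P) (q := q) (ha.1.comp_quasiMeasurePreserving hshift)
    ((hU.memLp.1.comp_quasiMeasurePreserving hshift).sub hU.memLp.1)).trans ?_
  refine mul_le_mul' (eLpNorm_comp_add_right ha.1 (-z)).le
    ((hU.eLpNorm_shift_sub_le hp hq hq' (-z)).trans ?_)
  gcongr
  simpa using hk.enorm_le_of_pd_ne_zero hz

lemma tendstoLp_friedrichsCommutator (hk : IsMollifierSeq k r C) (hp : 1 ≤ p) (hq : 1 ≤ q)
    (hq' : q ≠ ⊤) (hP : 1 ≤ P) (hP' : P ≠ ⊤) (hs : 1 ≤ s) (hs' : s ≠ ⊤) (hU : MemD01 p q U D)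
    (ha : MemLp a P volume) (haU : LocallyIntegrable (fun x => a x * U x) volume) (i : Fin 3) :
    TendstoLp (fun n => friedrichsCommutator (k n) a U i) atTop (fun x => a x * D i x) s
      volume := by
  have hDm (j : Fin 3) : AEStronglyMeasurable (D j) volume := (hU.memLp_grad j).1
  refine ⟨fun n => hk.memLp_friedrichsCommutator hp hq hq' hs hs' hU ha n i,
    (hU.memLp_grad i).mul ha, ?_⟩
  simp only [friedrichsCommutator_sub_eq_integral (hk.isTest _) (hk.integral_eq_one _)
    (ha.locallyIntegrable hP) haU]
  rw [ENNReal.tendsto_nhds_zero]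
  intro δ hδ
  have hδ' : 0 < δ / C := ENNReal.div_pos hδ.ne' ENNReal.coe_ne_top
  obtain ⟨ε, hε, hball⟩ := Metric.eventually_nhds_iff_ball.1
    (hU.eventually_eLpNorm_mul_shift_sub_sub_le hp hq hq' hP hP' hs ha hδ')
  filter_upwards [hk.tendsto_coe_radius.eventually_lt_const hε] with n hn
  have hpd := (hk.isTest n).pd i
  calc _ ≤ eLpNorm (pd (k n) i) 1 volume * (r n * (δ / C)) := by
        refine eLpNorm_integral_mul_le hs hs' hpd.integrable ?_ fun z hz => ?_
        · refine (aestronglyMeasurable_mul_shift_sub ha.1 hU.memLp.1).sub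
            (ha.1.comp_fst.mul (Finset.aestronglyMeasurable_fun_sum _ fun j _ =>
              (by fun_prop : Continuous _).aestronglyMeasurable.mul (hDm j).comp_fst))
        · have hzr := hk.enorm_le_of_pd_ne_zero hz
          have hz' : -z ∈ ball (0 : E3) ε := by
            rw [mem_ball_zero_iff, norm_neg]
            exact lt_of_le_of_lt (by simpa [← ofReal_norm] using hzr) hn
          simp only [sub_eq_add_neg _ z]
          refine (hball _ hz').trans ?_
          gcongr
          rwa [enorm_neg]
    _ = eLpNorm (pd (k n) i) 1 volume * r n * (δ / C) := by rw [mul_assoc]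
    _ ≤ C * (δ / C) := by gcongr; exact hk.eLpNorm_pd_mul_le n i
    _ ≤ δ := ENNReal.mul_div_le

end IsMollifierSeq

end

end Commutator

/-! ### Renormalisation of the continuity equation -/

/-- The locally integrable vector field `m` is weakly divergence free. -/
structure IsSolenoidal (m : Fin 3 → E3 → ℝ) : Prop where
  locallyIntegrable : ∀ i, LocallyIntegrable (m i) volume
  sum_integral_mul_pd : ∀ φ, IsTest univ φ → ∑ i, ∫ x, m i x * pd φ i x = 0

section Renormalisation

open ContinuousLinearMap (lsmul)

lemma IsSolenoidal.sum_pd_convolution_eq_zero {m : Fin 3 → E3 → ℝ} (hm : IsSolenoidal m)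
    {k : E3 → ℝ} (hk : IsTest univ k) (x : E3) :
    ∑ i, (pd k i ⋆[lsmul ℝ ℝ, volume] m i) x = 0 := by
  have h := hm.sum_integral_mul_pd _ (hk.comp_const_sub x)
  simp only [pd_comp_const_sub hk.differentiable, mul_neg, integral_neg, Finset.sum_neg_distrib,
    neg_eq_zero] at h
  simpa only [convolution_lsmul_swap, smul_eq_mul, mul_comm] using h

lemma IsSolenoidal.sum_mul_pd_convolution_eq {a : E3 → ℝ} {U : Fin 3 → E3 → ℝ}
    (hm : IsSolenoidal fun i x => a x * U i x) (ha : LocallyIntegrable a volume) {k : E3 → ℝ}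
    (hk : IsTest univ k) (x : E3) :
    ∑ i, friedrichsCommutator k a (U i) i x
      = -∑ i, U i x * pd (k ⋆[lsmul ℝ ℝ, volume] a) i x := by
  simp only [friedrichsCommutator_eq_sub hk ha (hm.locallyIntegrable _), Finset.sum_sub_distrib,
    hm.sum_pd_convolution_eq_zero hk, zero_sub]

lemma MemD01.integral_mul_pd_eq_neg {p q : ℝ≥0∞} (hp : 1 ≤ p) (hq : 1 ≤ q) {U : E3 → ℝ}
    {D : Fin 3 → E3 → ℝ} (hU : MemD01 p q U D) {ψ : E3 → ℝ} (hψ : ContDiff ℝ 1 ψ)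
    (hψc : HasCompactSupport ψ) (i : Fin 3) : ∫ x, U x * pd ψ i x = -∫ x, D i x * ψ x := by
  obtain ⟨v, hv, hvU, hvD⟩ := hU
  have := ENNReal.HolderConjugate.conjExponent hp
  have := ENNReal.HolderConjugate.conjExponent hq
  have hpd : MemLp (pd ψ i) p.conjExponent volume :=
    (continuous_pd hψ i).memLp_of_hasCompactSupport (hasCompactSupport_pd hψc i)
  have hψq : MemLp ψ q.conjExponent volume := hψ.continuous.memLp_of_hasCompactSupport hψc
  have hlhs := hvU.tendsto_integral_mul (TendstoLp.const hpd)
  have hrhs := (hvD i).tendsto_integral_mul (TendstoLp.const hψq)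
  refine tendsto_nhds_unique hlhs (hrhs.neg.congr fun n => ?_)
  exact (_root_.integral_mul_pd_eq_neg (hv n).contDiff_one hψ hψc i).symm

lemma integrable_mul_rpow_mul_pd {U χ b : E3 → ℝ} (hU : LocallyIntegrable U volume)
    (hχ : IsTest univ χ) (hb : ContDiff ℝ 1 b) {γ : ℝ} (hγ : 1 ≤ γ) (i : Fin 3) :
    Integrable (fun x => χ x * b x ^ (γ - 1) * (U x * pd b i x)) volume := by
  have hpow : Continuous fun x => b x ^ (γ - 1) :=
    hb.continuous.rpow_const fun x => Or.inr (by linarith)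
  refine (hU.integrable_smul_left_of_hasCompactSupport
    ((hχ.continuous.mul hpow).mul (continuous_pd hb i))
    hχ.hasCompactSupport.mul_right.mul_right).congr (Eventually.of_forall fun x => ?_)
  simp only [smul_eq_mul, Pi.mul_apply]
  ring

lemma MemD01.integral_mul_rpow_mul_pd {p q : ℝ≥0∞} (hp : 1 ≤ p) (hq : 1 ≤ q) {U : E3 → ℝ}
    {D : Fin 3 → E3 → ℝ} (hU : MemD01 p q U D) {χ b : E3 → ℝ} (hχ : IsTest univ χ)
    (hb : ContDiff ℝ 1 b) {γ : ℝ} (hγ : 1 ≤ γ) (i : Fin 3) :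
    γ * ∫ x, χ x * b x ^ (γ - 1) * (U x * pd b i x)
      = -((∫ x, b x ^ γ * (U x * pd χ i x)) + ∫ x, b x ^ γ * (D i x * χ x)) := by
  have hbγ : ContDiff ℝ 1 fun x => b x ^ γ := hb.rpow_const_of_le (by simpa using hγ)
  have hψ : ContDiff ℝ 1 fun x => χ x * b x ^ γ := hχ.contDiff_one.mul hbγ
  have hloc : LocallyIntegrable U volume := hU.memLp.locallyIntegrable hp
  have hfst : Integrable (fun x => b x ^ γ * (U x * pd χ i x)) volume := by
    refine (hloc.integrable_smul_left_of_hasCompactSupport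
      (hbγ.continuous.mul (hχ.pd i).continuous) (hχ.pd i).hasCompactSupport.mul_left).congr
      (Eventually.of_forall fun x => ?_)
    simp only [smul_eq_mul, Pi.mul_apply]
    ring
  have hpd (x : E3) : U x * pd (fun y => χ y * b y ^ γ) i x
      = b x ^ γ * (U x * pd χ i x) + γ * (χ x * b x ^ (γ - 1) * (U x * pd b i x)) := by
    rw [pd_mul (hχ.differentiable x) (hbγ.differentiable one_ne_zero x),
      pd_rpow hγ (hb.differentiable one_ne_zero x)]
    ring
  have hparts := hU.integral_mul_pd_eq_neg hp hq hψ hχ.hasCompactSupport.mul_right i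
  simp only [hpd] at hparts
  rw [integral_add hfst ((integrable_mul_rpow_mul_pd hloc hχ hb hγ i).const_mul γ),
    integral_const_mul] at hparts
  have hcomm (x : E3) : D i x * (χ x * b x ^ γ) = b x ^ γ * (D i x * χ x) := by ring
  simp only [hcomm] at hparts
  linarith

variable {p q : ℝ≥0∞} {γ : ℝ} {a : E3 → ℝ} {U : Fin 3 → E3 → ℝ} {D : Fin 3 → Fin 3 → E3 → ℝ}

lemma sum_integral_rpow_mul_friedrichsCommutator (hp : 1 ≤ p) (hq : 1 ≤ q) (hγ : 1 ≤ γ)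
    (hU : ∀ i, MemD01 p q (U i) (D i)) (ha : LocallyIntegrable a volume)
    (hm : IsSolenoidal fun i x => a x * U i x) {k χ : E3 → ℝ} (hk : IsTest univ k)
    (hχ : IsTest univ χ) (hint : ∀ i, Integrable (fun x => χ x
      * (k ⋆[lsmul ℝ ℝ, volume] a) x ^ (γ - 1) * friedrichsCommutator k a (U i) i x) volume) :
    γ * ∑ i, ∫ x, χ x * (k ⋆[lsmul ℝ ℝ, volume] a) x ^ (γ - 1)
        * friedrichsCommutator k a (U i) i x
      = ∑ i, ((∫ x, (k ⋆[lsmul ℝ ℝ, volume] a) x ^ γ * (U i x * pd χ i x))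
        + ∫ x, (k ⋆[lsmul ℝ ℝ, volume] a) x ^ γ * (D i i x * χ x)) := by
  set b : E3 → ℝ := k ⋆[lsmul ℝ ℝ, volume] a with hbdef
  have hb : ContDiff ℝ 1 b := (contDiff_convolution hk ha).of_le (by simp)
  have hintU (i : Fin 3) :=
    integrable_mul_rpow_mul_pd ((hU i).memLp.locallyIntegrable hp) hχ hb hγ i
  have hswap : ∑ i, ∫ x, χ x * b x ^ (γ - 1) * friedrichsCommutator k a (U i) i x
      = -∑ i, ∫ x, χ x * b x ^ (γ - 1) * (U i x * pd b i x) := by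
    rw [← integral_finsetSum _ fun i _ => hint i, ← integral_finsetSum _ fun i _ => hintU i,
      ← integral_neg]
    simp only [← Finset.mul_sum, hm.sum_mul_pd_convolution_eq ha hk, ← hbdef, mul_neg]
  rw [hswap, mul_neg, Finset.mul_sum, ← Finset.sum_neg_distrib]
  exact Finset.sum_congr rfl fun i _ => by
    rw [(hU i).integral_mul_rpow_mul_pd hp hq hχ hb hγ, neg_neg]

lemma holderTriple_two_mul (hγ : 0 < γ) : ENNReal.HolderTriple (ENNReal.ofReal (2 * γ)) 2
    (ENNReal.ofReal (2 * γ / (γ + 1))) := by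
  rw [← ENNReal.ofReal_ofNat 2]
  exact holderTriple_ofReal (by positivity) (by norm_num) (by positivity)
    (by field_simp; ring)

lemma holderTriple_two_mul_sub_one (hγ : 1 < γ) :
    ENNReal.HolderTriple (ENNReal.ofReal (2 * γ / (γ - 1)))
      (ENNReal.ofReal (2 * γ / (γ + 1))) 1 := by
  have : 0 < γ - 1 := by linarith
  rw [← ENNReal.ofReal_one]
  exact holderTriple_ofReal (by positivity) (by positivity) one_pos (by field_simp; ring)

lemma TendstoLp.rpow_two {α ι : Type*} [MeasurableSpace α] {ν : Measure α} {l : Filter ι}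
    {f : ι → α → ℝ} {f₀ : α → ℝ} (hγ : 1 < γ)
    (hf : TendstoLp f l f₀ (ENNReal.ofReal (2 * γ)) ν) (hpos : ∀ i x, 0 ≤ f i x)
    (hpos₀ : ∀ x, 0 ≤ f₀ x) : TendstoLp (fun i x => f i x ^ γ) l (fun x => f₀ x ^ γ) 2 ν := by
  have h := hf.rpow hγ (by linarith) hpos hpos₀
  rwa [mul_div_cancel_right₀ _ (by linarith : (0 : ℝ) < γ).ne', ENNReal.ofReal_ofNat] at h

lemma tendsto_integral_rpow_mul_friedrichsCommutator {k : ℕ → E3 → ℝ} {r : ℕ → ℝ≥0} {C : ℝ≥0}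
    (hk : IsMollifierSeq k r C) (hγ : 2 < γ) (ha0 : ∀ x, 0 ≤ a x)
    (ha : MemLp a (ENNReal.ofReal (2 * γ)) volume) {V : E3 → ℝ} {F : Fin 3 → E3 → ℝ}
    (hV : MemD01 6 2 V F) (haV : LocallyIntegrable (fun x => a x * V x) volume) {χ : E3 → ℝ}
    (hχ : IsTest univ χ) (i : Fin 3) :
    (∀ n, Integrable (fun x => χ x * (k n ⋆[lsmul ℝ ℝ, volume] a) x ^ (γ - 1)
        * friedrichsCommutator (k n) a V i x) volume) ∧
      Tendsto (fun n => ∫ x, χ x * (k n ⋆[lsmul ℝ ℝ, volume] a) x ^ (γ - 1)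
        * friedrichsCommutator (k n) a V i x) atTop (𝓝 (∫ x, a x ^ γ * (F i x * χ x))) := by
  have hP : 1 ≤ ENNReal.ofReal (2 * γ) := ENNReal.one_le_ofReal.2 (by linarith)
  have hs : 1 ≤ ENNReal.ofReal (2 * γ / (γ + 1)) :=
    ENNReal.one_le_ofReal.2 ((one_le_div (by linarith)).2 (by linarith))
  have hs' : 1 ≤ ENNReal.ofReal (2 * γ / (γ - 1)) :=
    ENNReal.one_le_ofReal.2 ((one_le_div (by linarith)).2 (by linarith))
  have := holderTriple_two_mul (by linarith : 0 < γ)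
  have := holderTriple_two_mul_sub_one (by linarith : 1 < γ)
  have hpow := (hk.tendstoLp_convolution hP ENNReal.ofReal_ne_top ha).rpow (s := γ - 1)
    (by linarith) (by linarith)
    (fun n x => integral_nonneg fun z => mul_nonneg (hk.nonneg n z) (ha0 _)) ha0
  have hχpow := (TendstoLp.const (hχ.memLp ⊤)).mul hpow hs'
  have hcomm := hk.tendstoLp_friedrichsCommutator (by norm_num) (by norm_num)
    (by norm_num) hP ENNReal.ofReal_ne_top hs ENNReal.ofReal_ne_top hV ha haV i
  refine ⟨fun n => (hχpow.memLp n).integrable_mul (hcomm.memLp n), ?_⟩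
  have hlim (x : E3) : χ x * a x ^ (γ - 1) * (a x * F i x) = a x ^ γ * (F i x * χ x) := by
    rw [← sub_add_cancel γ 1, Real.rpow_add_one' (ha0 x) (by linarith), add_sub_cancel_right]
    ring
  simpa only [hlim] using hχpow.tendsto_integral_mul hcomm

lemma sum_integral_rpow_mul_grad_eq (hγ : 2 < γ) (ha0 : ∀ x, 0 ≤ a x)
    (ha : MemLp a (ENNReal.ofReal (2 * γ)) volume) (hU : ∀ i, MemD01 6 2 (U i) (D i))
    (hm : IsSolenoidal fun i x => a x * U i x) {χ : E3 → ℝ} (hχ : IsTest univ χ) :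
    (γ - 1) * ∑ i, ∫ x, a x ^ γ * (D i i x * χ x)
      = ∑ i, ∫ x, a x ^ γ * (U i x * pd χ i x) := by
  obtain ⟨k, r, C, hk⟩ := exists_isMollifierSeq
  have hP : 1 ≤ ENNReal.ofReal (2 * γ) := ENNReal.one_le_ofReal.2 (by linarith)
  have hpow := (hk.tendstoLp_convolution hP ENNReal.ofReal_ne_top ha).rpow_two (by linarith)
    (fun n x => integral_nonneg fun z => mul_nonneg (hk.nonneg n z) (ha0 _)) ha0
  have hcomm (i : Fin 3) := tendsto_integral_rpow_mul_friedrichsCommutator hk hγ ha0 ha (hU i)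
    (hm.locallyIntegrable i) hχ i
  have : ENNReal.HolderTriple 6 3 2 := by
    simpa using holderTriple_ofReal (a := 6) (b := 3) (c := 2) (by norm_num) (by norm_num)
      (by norm_num) (by norm_num)
  have hflux (i : Fin 3) : MemLp (fun x => U i x * pd χ i x) 2 volume :=
    ((hχ.pd i).memLp 3).mul' (hU i).memLp
  have hdiv (i : Fin 3) : MemLp (fun x => D i i x * χ x) 2 volume :=
    (hχ.memLp ⊤).mul' ((hU i).memLp_grad i)
  have hlhs := (tendsto_finsetSum Finset.univ fun i _ => (hcomm i).2).const_mul γ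
  have hrhs := tendsto_finsetSum Finset.univ fun i _ =>
    (hpow.tendsto_integral_mul (TendstoLp.const (hflux i))).add
      (hpow.tendsto_integral_mul (TendstoLp.const (hdiv i)))
  have hlim := tendsto_nhds_unique hlhs (hrhs.congr fun n =>
    (sum_integral_rpow_mul_friedrichsCommutator (by norm_num) (by norm_num) (by linarith) hU
      (ha.locallyIntegrable hP) hm (hk.isTest n) hχ fun i => (hcomm i).1 n).symm)
  rw [Finset.sum_add_distrib] at hlim
  linarith

lemma memLp_of_memLp_rpow {α : Type*} [MeasurableSpace α] {ν : Measure α} {f : α → ℝ}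
    (hγ : 0 < γ) (hf0 : ∀ x, 0 ≤ f x) {P : ℝ} (hP : 0 ≤ P)
    (hf : MemLp (fun x => f x ^ γ) (ENNReal.ofReal P) ν) :
    MemLp f (ENNReal.ofReal (P * γ)) ν := by
  have h := memLp_rpow_ofReal (fun x => Real.rpow_nonneg (hf0 x) γ) hP (inv_pos.2 hγ) hf
  simpa only [Real.rpow_rpow_inv (hf0 _) hγ.ne', div_inv_eq_mul] using h

lemma integrable_mul_of_memLp_six {α : Type*} [MeasurableSpace α] {ν : Measure α} {f g : α → ℝ}
    (hf1 : Integrable f ν) (hf2 : MemLp f 2 ν) (hg : MemLp g 6 ν) :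
    Integrable (fun x => f x * g x) ν := by
  have hbound : Integrable (fun x => |f x| + f x ^ 2 + |g x| ^ 6) ν :=
    (hf1.abs.add hf2.integrable_sq).add (hg.integrable_norm_pow (p := 6) (by norm_num))
  refine hbound.mono' (hf1.1.mul hg.1) (Eventually.of_forall fun x => ?_)
  rw [Real.norm_eq_abs, abs_mul, ← sq_abs (f x)]
  rcases le_total |g x| 1 with h | h
  · nlinarith [mul_le_of_le_one_right (abs_nonneg (f x)) h, sq_nonneg |f x|,
      pow_nonneg (abs_nonneg (g x)) 6]
  · nlinarith [sq_nonneg (|f x| - |g x|), pow_le_pow_right₀ h (by norm_num : 2 ≤ 6),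
      abs_nonneg (f x)]

lemma sum_integral_rpow_mul_grad_eq_zero (hγ : 2 < γ) (ha0 : ∀ x, 0 ≤ a x)
    (haγ : Integrable (fun x => a x ^ γ) volume) (haγ2 : MemLp (fun x => a x ^ γ) 2 volume)
    (hU : ∀ i, MemD01 6 2 (U i) (D i)) (hm : IsSolenoidal fun i x => a x * U i x) :
    ∑ i, ∫ x, a x ^ γ * D i i x = 0 := by
  obtain ⟨χ, C, hχ⟩ := exists_isCutoffSeq
  have ha : MemLp a (ENNReal.ofReal (2 * γ)) volume :=
    memLp_of_memLp_rpow (by linarith) ha0 zero_le_two (by simpa using haγ2)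
  have hdiv (i : Fin 3) : Integrable (fun x => a x ^ γ * D i i x) volume :=
    haγ2.integrable_mul ((hU i).memLp_grad i)
  have hlhs := (tendsto_finsetSum Finset.univ fun i _ =>
    hχ.tendsto_integral_mul (hdiv i)).const_mul (γ - 1)
  have hrhs := tendsto_finsetSum Finset.univ fun i _ => hχ.tendsto_integral_mul_pd
    (integrable_mul_of_memLp_six haγ haγ2 (hU i).memLp) i
  have hlim := tendsto_nhds_unique hlhs (hrhs.congr fun n => by
    simpa only [mul_assoc] using (sum_integral_rpow_mul_grad_eq hγ ha0 ha hU hm (hχ.isTest n)).symm)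
  rw [Finset.sum_const_zero] at hlim
  exact (mul_eq_zero.1 hlim).resolve_left (by linarith)

end Renormalisation

/-! ### Pairings with solenoidal fields -/

lemma memLp_mul_isTest {p q : ℝ≥0∞} {f χ : E3 → ℝ} (hpq : p ≤ q) (hf : MemLp f q volume)
    (hχ : IsTest univ χ) : MemLp (fun x => f x * χ x) p volume := by
  have : ENNReal.HolderTriple q (p⁻¹ - q⁻¹)⁻¹ p :=
    ⟨by rw [inv_inv, add_tsub_cancel_of_le (ENNReal.inv_le_inv.2 hpq)]⟩
  exact (hχ.memLp (p⁻¹ - q⁻¹)⁻¹).mul' hf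

lemma MemD01.sq {p q s r : ℝ≥0∞} [ENNReal.HolderTriple p p s] [ENNReal.HolderTriple p q r]
    (hs : 1 ≤ s) (hr : 1 ≤ r) {V : E3 → ℝ} {F : Fin 3 → E3 → ℝ} (hV : MemD01 p q V F) :
    MemD01 s r (fun x => V x * V x) fun i x => 2 * (V x * F i x) := by
  obtain ⟨v, hv, hvV, hvF⟩ := hV
  refine ⟨fun n x => v n x * v n x, fun n => (hv n).mul (hv n), hvV.mul hvV hs, fun i => ?_⟩
  have hpd (n : ℕ) : pd (fun x => v n x * v n x) i = fun x => 2 * (v n x * pd (v n) i x) := by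
    ext x
    rw [pd_mul ((hv n).differentiable x) ((hv n).differentiable x)]
    ring
  have hprod := hvV.mul (hvF i) hr
  simp only [hpd]
  refine ⟨fun n => (hprod.memLp n).const_mul 2, hprod.memLp_lim.const_mul 2, ?_⟩
  have hnorm (n : ℕ) : eLpNorm (fun x => 2 * (v n x * pd (v n) i x) - 2 * (V x * F i x)) r volume
      = ‖(2 : ℝ)‖ₑ * eLpNorm (fun x => v n x * pd (v n) i x - V x * F i x) r volume := by
    rw [← eLpNorm_const_smul]
    simp only [Pi.smul_def, smul_eq_mul, mul_sub]
  simp only [hnorm]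
  simpa using ENNReal.Tendsto.const_mul hprod.tendsto (Or.inr enorm_ne_top)

namespace IsSolenoidal

variable {m : Fin 3 → E3 → ℝ} {r : ℝ≥0∞}

lemma sum_integral_mul_grad_eq_zero (hm : IsSolenoidal m) {q : ℝ≥0∞} [ENNReal.HolderTriple r q 1]
    (hmr : ∀ i, MemLp (m i) r volume) {v : ℕ → E3 → ℝ} {g : Fin 3 → E3 → ℝ}
    (hv : ∀ n, IsTest univ (v n))
    (hg : ∀ i, TendstoLp (fun n => pd (v n) i) atTop (g i) q volume) :
    ∑ i, ∫ x, m i x * g i x = 0 := by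
  have hlim := tendsto_finsetSum Finset.univ fun i _ =>
    (TendstoLp.const (hmr i)).tendsto_integral_mul (hg i)
  simp only [hm.sum_integral_mul_pd _ (hv _)] at hlim
  exact tendsto_nhds_unique hlim tendsto_const_nhds

lemma sum_integral_mul_pd_add_eq_zero (hm : IsSolenoidal m) (hmr : ∀ i, MemLp (m i) r volume)
    {p q p' q' : ℝ≥0∞} [ENNReal.HolderTriple p' p 1] [ENNReal.HolderTriple q' q 1] (hp : p' ≤ r)
    (hq : q' ≤ r) {V : E3 → ℝ} {F : Fin 3 → E3 → ℝ} (hV : MemD01 p q V F) {χ : E3 → ℝ}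
    (hχ : IsTest univ χ) :
    ∑ i, ((∫ x, m i x * pd χ i x * V x) + ∫ x, m i x * χ x * F i x) = 0 := by
  obtain ⟨v, hv, hvV, hvF⟩ := hV
  have hfst (i : Fin 3) := memLp_mul_isTest hp (hmr i) (hχ.pd i)
  have hsnd (i : Fin 3) := memLp_mul_isTest hq (hmr i) hχ
  have hlim := tendsto_finsetSum Finset.univ fun i _ =>
    ((TendstoLp.const (hfst i)).tendsto_integral_mul hvV).add
      ((TendstoLp.const (hsnd i)).tendsto_integral_mul (hvF i))
  have hzero (n : ℕ) : ∑ i, ((∫ x, m i x * pd χ i x * v n x)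
      + ∫ x, m i x * χ x * pd (v n) i x) = 0 := by
    rw [← hm.sum_integral_mul_pd _ (hχ.mul (hv n))]
    refine Finset.sum_congr rfl fun i _ => ?_
    have hintV : Integrable (fun x => m i x * pd χ i x * v n x) volume :=
      (hfst i).integrable_mul (hvV.memLp n)
    have hintF : Integrable (fun x => m i x * χ x * pd (v n) i x) volume :=
      (hsnd i).integrable_mul ((hvF i).memLp n)
    rw [← integral_add hintV hintF]
    refine integral_congr_ae (Eventually.of_forall fun x => ?_)
    simp only [pd_mul (hχ.differentiable x) ((hv n).differentiable x)]
    ring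
  simp only [hzero] at hlim
  exact tendsto_nhds_unique hlim tendsto_const_nhds

lemma sum_integral_mul_memD01_eq_zero (hm : IsSolenoidal m) (hmr : ∀ i, MemLp (m i) r volume)
    {p q p' q' : ℝ≥0∞} [ENNReal.HolderTriple p' p 1] [ENNReal.HolderTriple q' q 1] (hp : p' ≤ r)
    (hq : q' ≤ r) {V : E3 → ℝ} {F : Fin 3 → E3 → ℝ} (hV : MemD01 p q V F)
    (hmV : ∀ i, Integrable (fun x => m i x * V x) volume)
    (hmF : ∀ i, Integrable (fun x => m i x * F i x) volume) :
    ∑ i, ∫ x, m i x * F i x = 0 := by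
  obtain ⟨χ, C, hχ⟩ := exists_isCutoffSeq
  have hlim := tendsto_finsetSum Finset.univ fun i _ =>
    (hχ.tendsto_integral_mul_pd (hmV i) i).add (hχ.tendsto_integral_mul (hmF i))
  have hzero (n : ℕ) : ∑ i, ((∫ x, m i x * V x * pd (χ n) i x)
      + ∫ x, m i x * F i x * χ n x) = 0 := by
    simpa only [mul_right_comm] using
      hm.sum_integral_mul_pd_add_eq_zero hmr hp hq hV (hχ.isTest n)
  simp only [hzero, zero_add] at hlim
  exact tendsto_nhds_unique hlim tendsto_const_nhds

end IsSolenoidal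

/-! ### Functionals bounded by the Laplacian -/

/-- The functional `L` on test functions is bounded by the `L²` norm of the Laplacian. -/
def IsLapBounded (L : (E3 → ℝ) → ℝ) : Prop :=
  ∃ C : ℝ, ∀ ψ, IsTest univ ψ → |L ψ| ≤ C * (eLpNorm (lap ψ) 2 volume).toReal

namespace IsLapBounded

lemma sub {L M : (E3 → ℝ) → ℝ} (hL : IsLapBounded L) (hM : IsLapBounded M) :
    IsLapBounded fun ψ => L ψ - M ψ := by
  obtain ⟨C, hC⟩ := hL
  obtain ⟨C', hC'⟩ := hM
  exact ⟨C + C', fun ψ hψ => (abs_sub _ _).trans (by linarith [hC ψ hψ, hC' ψ hψ])⟩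

lemma sum {ι : Type*} {s : Finset ι} {L : ι → (E3 → ℝ) → ℝ} (hL : ∀ i, IsLapBounded (L i)) :
    IsLapBounded fun ψ => ∑ i ∈ s, L i ψ := by
  choose C hC using hL
  refine ⟨∑ i ∈ s, C i, fun ψ hψ => (Finset.abs_sum_le_sum_abs _ _).trans ?_⟩
  rw [Finset.sum_mul]
  exact Finset.sum_le_sum fun i _ => hC i ψ hψ

end IsLapBounded

lemma eLpNorm_pd_pd_le_eLpNorm_lap {ψ : E3 → ℝ} (hψ : IsTest univ ψ) (i j : Fin 3) :
    eLpNorm (pd (pd ψ i) j) 2 volume ≤ eLpNorm (lap ψ) 2 volume := by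
  rw [(((hψ.pd i).pd j).memLp 2).eLpNorm_eq_integral_rpow_norm (by norm_num) (by norm_num),
    (hψ.lap.memLp 2).eLpNorm_eq_integral_rpow_norm (by norm_num) (by norm_num)]
  refine ENNReal.ofReal_le_ofReal (Real.rpow_le_rpow (by positivity) ?_ (by positivity))
  simpa using integral_sq_pd_pd_le hψ i j

lemma isLapBounded_integral_mul_pd_pd {h : E3 → ℝ} (hh : MemLp h 2 volume) (i j : Fin 3) :
    IsLapBounded fun ψ => ∫ x, h x * pd (pd ψ i) j x := by
  refine ⟨(eLpNorm h 2 volume).toReal, fun ψ hψ =>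
    (abs_integral_mul_le hh (((hψ.pd i).pd j).memLp 2)).trans ?_⟩
  gcongr
  · exact (hψ.lap.memLp 2).2.ne
  · exact eLpNorm_pd_pd_le_eLpNorm_lap hψ i j

lemma isLapBounded_integral_mul_pd {p : ℝ≥0∞} [ENNReal.HolderTriple p 6 1] {f : E3 → ℝ}
    (hf : MemLp f p volume) (i : Fin 3) : IsLapBounded fun ψ => ∫ x, f x * pd ψ i x := by
  obtain ⟨C, hC⟩ := exists_eLpNorm_six_le_sum_eLpNorm_pd
  refine ⟨(eLpNorm f p volume).toReal * (C * 3), fun ψ hψ =>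
    (abs_integral_mul_le hf ((hψ.pd i).memLp 6)).trans ?_⟩
  have hsix : eLpNorm (pd ψ i) 6 volume ≤ C * 3 * eLpNorm (lap ψ) 2 volume :=
    calc eLpNorm (pd ψ i) 6 volume ≤ C * ∑ j, eLpNorm (pd (pd ψ i) j) 2 volume := hC _ (hψ.pd i)
      _ ≤ C * ∑ _j : Fin 3, eLpNorm (lap ψ) 2 volume := by
          gcongr with j
          exact eLpNorm_pd_pd_le_eLpNorm_lap hψ i j
      _ = C * 3 * eLpNorm (lap ψ) 2 volume := by simp [mul_assoc]
  have hlap := (hψ.lap.memLp 2).2.ne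
  rw [mul_assoc]
  gcongr
  simpa using ENNReal.toReal_mono (by finiteness) hsix

/-! ### Flows of finite energy -/

/-- The viscous stress tensor of a field with Jacobian `D`, where `D i j` stands for `∂ⱼ Uᵢ`. -/
def stress (μ η : ℝ) (D : Fin 3 → Fin 3 → E3 → ℝ) (i j : Fin 3) : E3 → ℝ :=
  fun x => Smat μ η (fun k l => D k l x) i j

lemma memLp_stress {μ η : ℝ} {D : Fin 3 → Fin 3 → E3 → ℝ} {p : ℝ≥0∞}
    (hD : ∀ i j, MemLp (D i j) p volume) (i j : Fin 3) : MemLp (stress μ η D i j) p volume := by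
  have hdiv : MemLp (fun x => ∑ k, D k k x) p volume := memLp_finsetSum _ fun k _ => hD k k
  exact ((((hD i j).add (hD j i)).sub ((hdiv.const_mul (2 / 3)).mul_const _)).const_mul μ).add
    ((hdiv.const_mul η).mul_const _)

lemma sq_mul_le_add_rpow_add_pow {r w γ : ℝ} (hr : 0 ≤ r) (hw : 0 ≤ w) (hγ : 6 ≤ γ) :
    (r * w) ^ 2 ≤ r * w + r ^ γ + w ^ 3 := by
  have hrw : 0 ≤ r * w := by positivity
  have hrγ : 0 ≤ r ^ γ := by positivity
  have hw3 : 0 ≤ w ^ 3 := by positivity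
  rcases le_total (r * w) 1 with hrw1 | hrw1
  · nlinarith
  rcases le_total r 1 with hr1 | hr1
  · have hrw_le : r * w ≤ w := mul_le_of_le_one_left hw hr1
    have hw_sq : (r * w) ^ 2 ≤ w ^ 2 := by gcongr
    linarith [pow_le_pow_right₀ (hrw1.trans hrw_le) (show 2 ≤ 3 by norm_num)]
  · have hr6 : r ^ 6 ≤ r ^ γ := by
      simpa using Real.rpow_le_rpow_of_exponent_le hr1 hγ
    rcases le_total (r ^ 2) w with hrw2 | hrw2
    · have : r ^ 2 * w ^ 2 ≤ w * w ^ 2 := by gcongr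
      linarith [mul_pow r w 2, pow_succ' w 2]
    · have : r ^ 2 * w ^ 2 ≤ r ^ 2 * (r ^ 2) ^ 2 := by gcongr
      nlinarith

lemma memLp_two_mul_of_integrable_rpow {α : Type*} [MeasurableSpace α] {ν : Measure α}
    {a w : α → ℝ} {γ : ℝ} (hγ : 6 ≤ γ) (ha0 : ∀ x, 0 ≤ a x)
    (haγ : Integrable (fun x => a x ^ γ) ν) (hw : MemLp w 3 ν)
    (haw : Integrable (fun x => a x * w x) ν) : MemLp (fun x => a x * w x) 2 ν := by
  rw [memLp_two_iff_integrable_sq haw.1]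
  have hw3 : Integrable (fun x => ‖w x‖ ^ 3) ν :=
    MemLp.integrable_norm_pow (p := 3) hw (by norm_num)
  refine ((haw.norm.add haγ).add hw3).mono' (haw.1.pow 2) (ae_of_all _ fun x => ?_)
  have hpt := sq_mul_le_add_rpow_add_pow (ha0 x) (norm_nonneg (w x)) hγ
  simpa [abs_mul, abs_of_nonneg (ha0 x), mul_pow] using hpt

lemma holderTriple_six_six_three : ENNReal.HolderTriple 6 6 3 := by
  simpa using holderTriple_ofReal (a := 6) (b := 6) (c := 3) (by norm_num) (by norm_num)
    (by norm_num) (by norm_num)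

lemma holderTriple_six_fifths_six : ENNReal.HolderTriple (ENNReal.ofReal (6 / 5)) 6 1 := by
  simpa using holderTriple_ofReal (a := 6 / 5) (b := 6) (c := 1) (by norm_num) (by norm_num)
    (by norm_num) (by norm_num)

lemma integral_sum_sum {α ι κ : Type*} [MeasurableSpace α] {ν : Measure α} [Fintype ι] [Fintype κ]
    {f : ι → κ → α → ℝ} (hf : ∀ i j, Integrable (f i j) ν) :
    ∫ x, ∑ i, ∑ j, f i j x ∂ν = ∑ i, ∑ j, ∫ x, f i j x ∂ν := by
  rw [integral_finsetSum _ fun i _ => integrable_finsetSum _ fun j _ => hf i j]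
  exact Finset.sum_congr rfl fun i _ => integral_finsetSum _ fun j _ => hf i j

/-- A weak solution on `ℝ³` of finite total energy, in components: density `a`, velocity `U` with
Jacobian `D`, and force density `a g`, where `g` is an `L^(6γ/(5γ-6))` limit of gradients of test
functions. -/
structure IsFiniteEnergyFlow (μ η γ : ℝ) (a : E3 → ℝ) (U : Fin 3 → E3 → ℝ)
    (D : Fin 3 → Fin 3 → E3 → ℝ) (g : Fin 3 → E3 → ℝ) : Prop where
  nonneg : ∀ x, 0 ≤ a x
  integrable_rpow : Integrable (fun x => a x ^ γ) volume
  integrable_mul_sum_sq : Integrable (fun x => a x * ∑ i, U i x ^ 2) volume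
  memD01 : ∀ i, MemD01 6 2 (U i) (D i)
  isSolenoidal : IsSolenoidal fun i x => a x * U i x
  exists_tendstoLp_grad : ∃ v : ℕ → E3 → ℝ, (∀ n, IsTest univ (v n)) ∧ ∀ i,
    TendstoLp (fun n => pd (v n) i) atTop (g i) (ENNReal.ofReal (6 * γ / (5 * γ - 6))) volume
  momentum : ∀ φ : Fin 3 → E3 → ℝ, (∀ i, IsTest univ (φ i)) →
    ∫ x, ((∑ i, ∑ j, a x * U i x * U j x * pd (φ i) j x) + a x ^ γ * ∑ i, pd (φ i) i x)
      = (∫ x, ∑ i, ∑ j, stress μ η D i j x * pd (φ i) j x) - ∫ x, ∑ i, a x * g i x * φ i x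

namespace IsFiniteEnergyFlow

variable {μ η γ : ℝ} {a : E3 → ℝ} {U : Fin 3 → E3 → ℝ} {D : Fin 3 → Fin 3 → E3 → ℝ}
  {g : Fin 3 → E3 → ℝ}

lemma memLp_density (h : IsFiniteEnergyFlow μ η γ a U D g) (hγ : 0 < γ) :
    MemLp a (ENNReal.ofReal γ) volume := by
  have haγ : MemLp (fun x => a x ^ γ) (ENNReal.ofReal 1) volume := by
    simpa only [ENNReal.ofReal_one, memLp_one_iff_integrable] using h.integrable_rpow
  simpa only [one_mul] using memLp_of_memLp_rpow hγ h.nonneg zero_le_one haγ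

lemma memLp_two_stress (h : IsFiniteEnergyFlow μ η γ a U D g) (i j : Fin 3) :
    MemLp (stress μ η D i j) 2 volume :=
  memLp_stress (fun k l => (h.memD01 k).memLp_grad l) i j

lemma integrable_convective (h : IsFiniteEnergyFlow μ η γ a U D g) (hγ : 0 < γ) (i j : Fin 3) :
    Integrable (fun x => a x * U i x * U j x) volume := by
  refine h.integrable_mul_sum_sq.mono' (((h.memLp_density hγ).1.mul (h.memD01 i).memLp.1).mul
    (h.memD01 j).memLp.1) (ae_of_all _ fun x => ?_)
  have hsq (k : Fin 3) : |U k x| ^ 2 ≤ ∑ l, U l x ^ 2 := by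
    rw [sq_abs]
    exact Finset.single_le_sum (f := fun l => U l x ^ 2) (fun l _ => sq_nonneg _)
      (Finset.mem_univ k)
  have hprod : |U i x| * |U j x| ≤ ∑ l, U l x ^ 2 := by
    linarith [two_mul_le_add_sq (|U i x|) (|U j x|), hsq i, hsq j]
  rw [Real.norm_eq_abs, mul_assoc, abs_mul, abs_mul, abs_of_nonneg (h.nonneg x)]
  exact mul_le_mul_of_nonneg_left hprod (h.nonneg x)

lemma memLp_two_convective (h : IsFiniteEnergyFlow μ η γ a U D g) (hγ : 6 ≤ γ) (i j : Fin 3) :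
    MemLp (fun x => a x * U i x * U j x) 2 volume := by
  have := holderTriple_six_six_three
  have hUU : MemLp (fun x => U i x * U j x) 3 volume := (h.memD01 j).memLp.mul' (h.memD01 i).memLp
  simpa only [mul_assoc] using memLp_two_mul_of_integrable_rpow hγ h.nonneg h.integrable_rpow hUU
    (by simpa only [mul_assoc] using h.integrable_convective (by linarith) i j)

lemma memLp_force (h : IsFiniteEnergyFlow μ η γ a U D g) (hγ : 6 ≤ γ) (i : Fin 3) :
    MemLp (fun x => a x * g i x) (ENNReal.ofReal (6 / 5)) volume := by
  have : ENNReal.HolderTriple (ENNReal.ofReal γ) (ENNReal.ofReal (6 * γ / (5 * γ - 6)))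
      (ENNReal.ofReal (6 / 5)) := by
    refine holderTriple_ofReal (by linarith) (div_pos (by linarith) (by linarith)) (by norm_num) ?_
    field_simp
    ring
  obtain ⟨v, -, hv⟩ := h.exists_tendstoLp_grad
  exact (hv i).memLp_lim.mul' (h.memLp_density (by linarith))

lemma memLp_momentum (h : IsFiniteEnergyFlow μ η γ a U D g) (hγ : 0 < γ) (i : Fin 3) :
    MemLp (fun x => a x * U i x) (ENNReal.ofReal (6 * γ / (γ + 6))) volume := by
  have : ENNReal.HolderTriple (ENNReal.ofReal γ) 6 (ENNReal.ofReal (6 * γ / (γ + 6))) := by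
    have := holderTriple_ofReal (a := γ) (b := 6) (c := 6 * γ / (γ + 6)) hγ (by norm_num)
      (by positivity) (by field_simp; ring)
    simpa using this
  exact (h.memD01 i).memLp.mul' (h.memLp_density hγ)

lemma sum_integral_momentum_mul_force_eq_zero (h : IsFiniteEnergyFlow μ η γ a U D g)
    (hγ : 6 ≤ γ) : ∑ i, ∫ x, a x * U i x * g i x = 0 := by
  have : ENNReal.HolderTriple (ENNReal.ofReal (6 * γ / (γ + 6)))
      (ENNReal.ofReal (6 * γ / (5 * γ - 6))) 1 := by
    have := holderTriple_ofReal (a := 6 * γ / (γ + 6)) (b := 6 * γ / (5 * γ - 6)) (c := 1)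
      (div_pos (by linarith) (by linarith)) (div_pos (by linarith) (by linarith)) one_pos
      (by field_simp; ring)
    simpa only [ENNReal.ofReal_one] using this
  obtain ⟨v, hv, hvg⟩ := h.exists_tendstoLp_grad
  exact h.isSolenoidal.sum_integral_mul_grad_eq_zero (fun i => h.memLp_momentum (by linarith) i)
    hv hvg

lemma momentum_split (h : IsFiniteEnergyFlow μ η γ a U D g) (hγ : 6 ≤ γ) {φ : Fin 3 → E3 → ℝ}
    (hφ : ∀ i, IsTest univ (φ i)) :
    (∑ i, ∑ j, ∫ x, a x * U i x * U j x * pd (φ i) j x) + ∑ i, ∫ x, a x ^ γ * pd (φ i) i x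
      = (∑ i, ∑ j, ∫ x, stress μ η D i j x * pd (φ i) j x) - ∑ i, ∫ x, a x * g i x * φ i x := by
  have hconv (i j : Fin 3) : Integrable (fun x => a x * U i x * U j x * pd (φ i) j x) volume :=
    integrable_mul_isTest (h.integrable_convective (by linarith) i j).locallyIntegrable
      ((hφ i).pd j)
  have hpress (i : Fin 3) : Integrable (fun x => a x ^ γ * pd (φ i) i x) volume :=
    integrable_mul_isTest h.integrable_rpow.locallyIntegrable ((hφ i).pd i)
  have hstress (i j : Fin 3) : Integrable (fun x => stress μ η D i j x * pd (φ i) j x) volume :=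
    (h.memLp_two_stress i j).integrable_mul (((hφ i).pd j).memLp 2)
  have hforce (i : Fin 3) : Integrable (fun x => a x * g i x * φ i x) volume :=
    integrable_mul_isTest ((h.memLp_force hγ i).locallyIntegrable (by norm_num)) (hφ i)
  have hmom := h.momentum φ hφ
  simp only [Finset.mul_sum] at hmom
  rw [integral_add (integrable_finsetSum _ fun i _ => integrable_finsetSum _ fun j _ => hconv i j)
    (integrable_finsetSum _ fun i _ => hpress i),
    integral_sum_sum hconv, integral_sum_sum hstress, integral_finsetSum _ fun i _ => hforce i,
    integral_finsetSum _ fun i _ => hpress i] at hmom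
  exact hmom

lemma memLp_two_pressure (h : IsFiniteEnergyFlow μ η γ a U D g) (hγ : 6 ≤ γ) :
    MemLp (fun x => a x ^ γ) 2 volume := by
  have := holderTriple_six_fifths_six
  have hpressure (ψ : E3 → ℝ) (hψ : IsTest univ ψ) : ∫ x, a x ^ γ * lap ψ x
      = (∑ i, ∑ j, ∫ x, stress μ η D i j x * pd (pd ψ i) j x)
        - (∑ i, ∫ x, a x * g i x * pd ψ i x)
        - ∑ i, ∑ j, ∫ x, a x * U i x * U j x * pd (pd ψ i) j x := by
    rw [← h.momentum_split hγ (φ := fun i => pd ψ i) fun i => hψ.pd i, add_sub_cancel_left]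
    simp only [lap, Finset.mul_sum]
    exact integral_finsetSum _ fun i _ =>
      integrable_mul_isTest h.integrable_rpow.locallyIntegrable ((hψ.pd i).pd i)
  have hbound : IsLapBounded fun ψ => (∑ i, ∑ j, ∫ x, stress μ η D i j x * pd (pd ψ i) j x)
      - (∑ i, ∫ x, a x * g i x * pd ψ i x)
      - ∑ i, ∑ j, ∫ x, a x * U i x * U j x * pd (pd ψ i) j x :=
    ((IsLapBounded.sum fun i => .sum fun j =>
        isLapBounded_integral_mul_pd_pd (h.memLp_two_stress i j) i j).sub
      (.sum fun i => isLapBounded_integral_mul_pd (h.memLp_force hγ i) i)).sub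
      (.sum fun i => .sum fun j =>
        isLapBounded_integral_mul_pd_pd (h.memLp_two_convective hγ i j) i j)
  obtain ⟨A, hA⟩ := hbound
  exact memLp_two_of_forall_abs_integral_mul_lap_le h.integrable_rpow A fun ψ hψ => by
    simpa only [hpressure ψ hψ] using hA ψ hψ

lemma momentum_memD01 (h : IsFiniteEnergyFlow μ η γ a U D g) (hγ : 6 ≤ γ) {V : Fin 3 → E3 → ℝ}
    {F : Fin 3 → Fin 3 → E3 → ℝ} (hV : ∀ i, MemD01 6 2 (V i) (F i)) :
    (∑ i, ∑ j, ∫ x, a x * U i x * U j x * F i j x) + ∑ i, ∫ x, a x ^ γ * F i i x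
      = (∑ i, ∑ j, ∫ x, stress μ η D i j x * F i j x) - ∑ i, ∫ x, a x * g i x * V i x := by
  have := holderTriple_six_fifths_six
  choose v hv hvV hvF using hV
  have hlim {f : E3 → ℝ} (hf : MemLp f 2 volume) (i j : Fin 3) :=
    (TendstoLp.const (l := atTop) hf).tendsto_integral_mul (hvF i j)
  have hlhs := (tendsto_finsetSum Finset.univ fun i _ => tendsto_finsetSum Finset.univ fun j _ =>
      hlim (h.memLp_two_convective hγ i j) i j).add
    (tendsto_finsetSum Finset.univ fun i _ => hlim (h.memLp_two_pressure hγ) i i)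
  have hrhs := (tendsto_finsetSum Finset.univ fun i _ => tendsto_finsetSum Finset.univ fun j _ =>
      hlim (h.memLp_two_stress i j) i j).sub
    (tendsto_finsetSum Finset.univ fun i _ =>
      (TendstoLp.const (h.memLp_force hγ i)).tendsto_integral_mul (hvV i))
  refine tendsto_nhds_unique hlhs (hrhs.congr fun n => ?_)
  exact (h.momentum_split hγ (φ := fun i => v i n) fun i => hv i n).symm

lemma sum_integral_momentum_mul_velocity_mul_grad_eq_zero (h : IsFiniteEnergyFlow μ η γ a U D g)
    (hγ : 6 ≤ γ) (j : Fin 3) : ∑ i, ∫ x, a x * U i x * (2 * (U j x * D j i x)) = 0 := by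
  have := holderTriple_six_six_three
  have : ENNReal.HolderTriple 6 2 (ENNReal.ofReal (3 / 2)) := by
    simpa using holderTriple_ofReal (a := 6) (b := 2) (c := 3 / 2) (by norm_num) (by norm_num)
      (by norm_num) (by norm_num)
  have hconj : ENNReal.HolderTriple (ENNReal.ofReal (3 / 2)) 3 1 := by
    simpa using holderTriple_ofReal (a := 3 / 2) (b := 3) (c := 1) (by norm_num) (by norm_num)
      (by norm_num) (by norm_num)
  have := hconj.symm
  have hr : (3 : ℝ) ≤ 6 * γ / (γ + 6) := by
    rw [le_div_iff₀ (by linarith)]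
    linarith
  refine h.isSolenoidal.sum_integral_mul_memD01_eq_zero
    (fun i => h.memLp_momentum (by linarith) i) (p' := ENNReal.ofReal (3 / 2)) (q' := 3)
    (ENNReal.ofReal_le_ofReal (by linarith)) (by simpa using ENNReal.ofReal_le_ofReal hr)
    ((h.memD01 j).sq (s := 3) (r := ENNReal.ofReal (3 / 2)) (by norm_num) (by norm_num))
    (fun i => ?_) fun i => ?_
  · simpa only [mul_assoc] using integrable_mul_of_memLp_six
      (h.integrable_convective (by linarith) i j) (h.memLp_two_convective hγ i j)
      (h.memD01 j).memLp
  · refine (((h.memLp_two_convective hγ i j).integrable_mul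
      ((h.memD01 j).memLp_grad i)).const_mul 2).congr (ae_of_all _ fun x => ?_)
    simp only [Pi.mul_apply]
    ring

lemma sum_integral_convective_mul_grad_eq_zero (h : IsFiniteEnergyFlow μ η γ a U D g)
    (hγ : 6 ≤ γ) : ∑ i, ∑ j, ∫ x, a x * U i x * U j x * D i j x = 0 := by
  refine Finset.sum_eq_zero fun j _ => ?_
  have htwo : 2 * ∑ i, ∫ x, a x * U j x * U i x * D j i x = 0 := by
    rw [← h.sum_integral_momentum_mul_velocity_mul_grad_eq_zero hγ j, Finset.mul_sum]
    refine Finset.sum_congr rfl fun i _ => ?_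
    rw [← integral_const_mul]
    exact integral_congr_ae (ae_of_all _ fun x => by ring)
  linarith

lemma sum_integral_stress_mul_grad_eq_zero (h : IsFiniteEnergyFlow μ η γ a U D g)
    (hγ : 6 ≤ γ) : ∑ i, ∑ j, ∫ x, stress μ η D i j x * D i j x = 0 := by
  have hbalance := h.momentum_memD01 hγ h.memD01
  have hpressure := sum_integral_rpow_mul_grad_eq_zero (by linarith) h.nonneg h.integrable_rpow
    (h.memLp_two_pressure hγ) h.memD01 h.isSolenoidal
  have hforce : ∑ i, ∫ x, a x * g i x * U i x = 0 := by
    simpa only [mul_right_comm] using h.sum_integral_momentum_mul_force_eq_zero hγ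
  linarith [h.sum_integral_convective_mul_grad_eq_zero hγ]

end IsFiniteEnergyFlow

/-! ### Coercivity of the viscous dissipation -/

lemma MemD01.integral_grad_mul_grad_comm {p p' : ℝ≥0∞} {V W : E3 → ℝ} {F H : Fin 3 → E3 → ℝ}
    (hV : MemD01 p 2 V F) (hW : MemD01 p' 2 W H) (i j : Fin 3) :
    ∫ x, F i x * H j x = ∫ x, F j x * H i x := by
  obtain ⟨v, hv, -, hvF⟩ := hV
  obtain ⟨w, hw, -, hwH⟩ := hW
  refine tendsto_nhds_unique ((hvF i).tendsto_integral_mul (hwH j))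
    (((hvF j).tendsto_integral_mul (hwH i)).congr fun n => ?_)
  exact integral_pd_mul_pd_comm (hv n).contDiff (hw n) j i

lemma sum_mul_sq_add_le_sum_Smat_mul {μ η : ℝ} (hμ : 0 ≤ μ) (hη : 0 ≤ η)
    (M : Fin 3 → Fin 3 → ℝ) :
    ∑ i, ∑ j, μ * (M i j ^ 2 + (M j i * M i j - M j j * M i i))
      ≤ ∑ i, ∑ j, Smat μ η M i j * M i j := by
  have hsub : (∑ i, ∑ j, Smat μ η M i j * M i j)
      - ∑ i, ∑ j, μ * (M i j ^ 2 + (M j i * M i j - M j j * M i i))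
      = (μ / 3 + η) * (∑ k, M k k) ^ 2 := by
    simp only [Smat, Fin.sum_univ_three, Fin.isValue, Fin.reduceEq, if_true, if_false]
    ring
  nlinarith [show 0 ≤ (μ / 3 + η) * (∑ k, M k k) ^ 2 by positivity]

lemma mul_sum_integral_sq_grad_le_sum_integral_stress_mul_grad {μ η : ℝ} (hμ : 0 ≤ μ)
    (hη : 0 ≤ η) {p : ℝ≥0∞} {U : Fin 3 → E3 → ℝ} {D : Fin 3 → Fin 3 → E3 → ℝ}
    (hU : ∀ i, MemD01 p 2 (U i) (D i)) :
    μ * ∑ i, ∑ j, ∫ x, D i j x ^ 2 ≤ ∑ i, ∑ j, ∫ x, stress μ η D i j x * D i j x := by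
  have hD (i j : Fin 3) : MemLp (D i j) 2 volume := (hU i).memLp_grad j
  have hDD (i j k l : Fin 3) : Integrable (fun x => D i j x * D k l x) volume :=
    (hD i j).integrable_mul (hD k l)
  have hcross (i j : Fin 3) : Integrable (fun x => D j i x * D i j x - D j j x * D i i x) volume :=
    (hDD j i i j).sub (hDD j j i i)
  have hquad (i j : Fin 3) : Integrable
      (fun x => μ * (D i j x ^ 2 + (D j i x * D i j x - D j j x * D i i x))) volume :=
    ((hD i j).integrable_sq.add (hcross i j)).const_mul μ
  have hdiss (i j : Fin 3) : Integrable (fun x => stress μ η D i j x * D i j x) volume :=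
    (memLp_stress hD i j).integrable_mul (hD i j)
  have hint (i j : Fin 3) : ∫ x, μ * (D i j x ^ 2 + (D j i x * D i j x - D j j x * D i i x))
      = μ * ∫ x, D i j x ^ 2 := by
    rw [integral_const_mul, integral_add (hD i j).integrable_sq (hcross i j),
      integral_sub (hDD j i i j) (hDD j j i i), (hU j).integral_grad_mul_grad_comm (hU i) i j,
      sub_self, add_zero]
  simp only [Finset.mul_sum, ← hint]
  rw [← integral_sum_sum hquad, ← integral_sum_sum hdiss]
  exact integral_mono (integrable_finsetSum _ fun i _ => integrable_finsetSum _ fun j _ =>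
    hquad i j) (integrable_finsetSum _ fun i _ => integrable_finsetSum _ fun j _ => hdiss i j)
    fun x => sum_mul_sq_add_le_sum_Smat_mul hμ hη fun i j => D i j x

lemma MemD01.ae_eq_zero_of_grad_ae_eq_zero {U : E3 → ℝ} {D : Fin 3 → E3 → ℝ}
    (hU : MemD01 6 2 U D) (hD : ∀ j, D j =ᵐ[volume] 0) : U =ᵐ[volume] 0 := by
  rw [← eLpNorm_eq_zero_iff hU.memLp.1 (p := 6) (by norm_num)]
  obtain ⟨C, hC⟩ := exists_eLpNorm_six_le_sum_eLpNorm_pd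
  obtain ⟨v, hv, hvU, hvD⟩ := hU
  have hgrad : Tendsto (fun n => C * ∑ j, eLpNorm (pd (v n) j) 2 volume) atTop
      (𝓝 (C * ∑ j, eLpNorm (D j) 2 volume)) :=
    ENNReal.Tendsto.const_mul (tendsto_finsetSum _ fun j _ =>
      (hvD j).tendsto_eLpNorm (by norm_num)) (Or.inr ENNReal.coe_ne_top)
  have hle := le_of_tendsto_of_tendsto' (hvU.tendsto_eLpNorm (by norm_num)) hgrad
    fun n => hC (v n) (hv n)
  simpa only [eLpNorm_congr_ae (hD _), eLpNorm_zero, Finset.sum_const_zero, mul_zero,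
    nonpos_iff_eq_zero] using hle

lemma IsFiniteEnergyFlow.velocity_ae_eq_zero {μ η γ : ℝ} (hμ : 0 < μ) (hη : 0 ≤ η) (hγ : 6 ≤ γ)
    {a : E3 → ℝ} {U : Fin 3 → E3 → ℝ} {D : Fin 3 → Fin 3 → E3 → ℝ} {g : Fin 3 → E3 → ℝ}
    (h : IsFiniteEnergyFlow μ η γ a U D g) (i : Fin 3) : U i =ᵐ[volume] 0 := by
  have hcoercive := mul_sum_integral_sq_grad_le_sum_integral_stress_mul_grad hμ.le hη h.memD01
  rw [h.sum_integral_stress_mul_grad_eq_zero hγ] at hcoercive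
  have hnonneg (k l : Fin 3) : 0 ≤ ∫ x, D k l x ^ 2 := integral_nonneg fun x => sq_nonneg _
  have hzero : ∑ k, ∑ l, ∫ x, D k l x ^ 2 = 0 := le_antisymm (by nlinarith)
    (Finset.sum_nonneg fun k _ => Finset.sum_nonneg fun l _ => hnonneg k l)
  refine (h.memD01 i).ae_eq_zero_of_grad_ae_eq_zero fun j => ?_
  have hrow := (Finset.sum_eq_zero_iff_of_nonneg fun k _ =>
    Finset.sum_nonneg fun l _ => hnonneg k l).1 hzero i (Finset.mem_univ i)
  have hDij := (Finset.sum_eq_zero_iff_of_nonneg fun l _ => hnonneg i l).1 hrow j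
    (Finset.mem_univ j)
  filter_upwards [(integral_eq_zero_iff_of_nonneg (fun x => sq_nonneg (D i j x))
    ((h.memD01 i).memLp_grad j).integrable_sq).1 hDij] with x hx
  simpa using hx

/-! ### Component form of weak solutions -/

lemma IsTestVec.isTest_apply {Ω : Set E3} {φ : E3 → Fin 3 → ℝ} (hφ : IsTestVec ∞ Ω φ)
    (i : Fin 3) : IsTest Ω fun x => φ x i :=
  ⟨contDiff_pi.1 hφ.1 i, hφ.2.1.comp_left (g := fun y : Fin 3 → ℝ => y i) rfl,
    (closure_mono (Function.support_comp_subset (g := fun y : Fin 3 → ℝ => y i) rfl φ)).trans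
      hφ.2.2⟩

lemma isTestVec_one_of_isTest {φ : Fin 3 → E3 → ℝ} (hφ : ∀ i, IsTest univ (φ i)) :
    IsTestVec 1 univ fun x i => φ i x := by
  refine ⟨contDiff_pi.2 fun i => (hφ i).contDiff_one, ?_, subset_univ _⟩
  refine HasCompactSupport.intro (isCompact_iUnion fun i => (hφ i).hasCompactSupport)
    fun x hx => funext fun i => image_eq_zero_of_notMem_tsupport ?_
  exact fun hxi => hx (mem_iUnion_of_mem i hxi)

lemma tendstoLp_of_norm_sub_le {α ι F : Type*} [MeasurableSpace α] {ν : Measure α}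
    [NormedAddCommGroup F] {l : Filter ι} [l.NeBot] {p : ℝ≥0∞} {f : ι → α → ℝ} {f₀ : α → ℝ}
    {R : ι → α → F} (hf : ∀ i, MemLp (f i) p ν) (hf₀ : AEStronglyMeasurable f₀ ν)
    (hle : ∀ i x, ‖f i x - f₀ x‖ ≤ ‖R i x‖) (hR : Tendsto (fun i => eLpNorm (R i) p ν) l (𝓝 0)) :
    TendstoLp f l f₀ p ν := by
  have hlim : Tendsto (fun i => eLpNorm (fun x => f i x - f₀ x) p ν) l (𝓝 0) :=
    tendsto_of_tendsto_of_tendsto_of_le_of_le tendsto_const_nhds hR (fun _ => zero_le)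
      fun i => eLpNorm_mono (hle i)
  obtain ⟨i, hi⟩ := (hlim.eventually (gt_mem_nhds ENNReal.zero_lt_top)).exists
  have hdiff : MemLp (fun x => f i x - f₀ x) p ν := ⟨(hf i).1.sub hf₀, hi⟩
  exact ⟨hf, ((hf i).sub hdiff).ae_eq (ae_of_all _ fun x => sub_sub_cancel _ _), hlim⟩

lemma MemD012.memD01 {u : E3 → Fin 3 → ℝ} {du : E3 → Fin 3 → Fin 3 → ℝ}
    (hu : MemD012 univ u du) (i : Fin 3) :
    MemD01 6 2 (fun x => u x i) fun j x => du x i j := by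
  obtain ⟨hloc, -, hdu, v, hv, hvdu, hvu⟩ := hu
  simp only [Measure.restrict_univ] at hdu hvdu hvu
  have htest (n : ℕ) := (hv n).isTest_apply i
  refine ⟨fun n x => v n x i, htest, ?_, fun j => ?_⟩
  · exact tendstoLp_of_norm_sub_le (fun n => (htest n).memLp 6)
      ((continuous_apply i).comp_aestronglyMeasurable
        (locallyIntegrableOn_univ.1 hloc).aestronglyMeasurable)
      (fun n x => norm_le_pi_norm (v n x - u x) i) hvu
  · exact tendstoLp_of_norm_sub_le (fun n => ((htest n).pd j).memLp 2)
      ((continuous_apply_apply i j).comp_aestronglyMeasurable hdu.1)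
      (fun n x => (norm_le_pi_norm ((tgrad (v n) x - du x) i) j).trans
        (norm_le_pi_norm (tgrad (v n) x - du x) i)) hvdu

lemma MemD01q.exists_tendstoLp_grad {G : E3 → ℝ} {dG : E3 → Fin 3 → ℝ} {q : ℝ}
    (hG : MemD01q univ G dG q) : ∃ v : ℕ → E3 → ℝ, (∀ n, IsTest univ (v n)) ∧ ∀ i,
      TendstoLp (fun n => pd (v n) i) atTop (fun x => dG x i) (ENNReal.ofReal q) volume := by
  obtain ⟨-, hdG, v, hv, hvG, -⟩ := hG
  simp only [Measure.restrict_univ] at hdG hvG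
  exact ⟨v, hv, fun i => tendstoLp_of_norm_sub_le (fun n => ((hv n).pd i).memLp _)
    ((continuous_apply i).comp_aestronglyMeasurable hdG.1)
    (fun n x => norm_le_pi_norm ((fun k => pd (v n) k x) - dG x) i) hvG⟩

lemma IsSolenoidal.congr_ae {m m' : Fin 3 → E3 → ℝ} (hm : IsSolenoidal m)
    (h : ∀ i, m i =ᵐ[volume] m' i) : IsSolenoidal m' where
  locallyIntegrable i := (hm.locallyIntegrable i).congr (h i)
  sum_integral_mul_pd φ hφ := by
    rw [← hm.sum_integral_mul_pd φ hφ]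
    exact Finset.sum_congr rfl fun i _ => integral_congr_ae ((h i).symm.mul (ae_eq_refl _))

namespace WeakSolution

variable {μ η γ : ℝ} {G : E3 → ℝ} {dG : E3 → Fin 3 → ℝ} {ρ : E3 → ℝ} {u : E3 → Fin 3 → ℝ}
  {du : E3 → Fin 3 → Fin 3 → ℝ}

lemma isSolenoidal {p : ℝ → ℝ} (h : WeakSolution univ μ η p G dG ρ u du) :
    IsSolenoidal fun i x => ρ x * u x i := by
  have hloc (i : Fin 3) : LocallyIntegrable (fun x => ρ x * u x i) volume := by
    have := h.ρu_locInt
    rw [closure_univ, locallyIntegrableOn_univ] at this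
    exact fun x => (this x).imp fun s hs => ⟨hs.1, hs.2.eval i⟩
  refine ⟨hloc, fun φ hφ => ?_⟩
  have hmass := h.mass φ hφ.contDiff hφ.hasCompactSupport
  simp only [Measure.restrict_univ, Finset.mul_sum, ← mul_assoc] at hmass
  rwa [integral_finsetSum _ fun i _ => integrable_mul_isTest (hloc i) (hφ.pd i)] at hmass

lemma integrable_of_finite_energy (h : WeakSolution univ μ η (fun s => s ^ γ) G dG ρ u du)
    (hγ : 1 < γ) (henergy : Integrable
      (fun x => (1 / 2) * ρ x * (∑ i, (u x i) ^ 2) + ρ x ^ γ / (γ - 1)) volume) :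
    Integrable (fun x => ρ x * ∑ i, u x i ^ 2) volume ∧
      Integrable (fun x => ρ x ^ γ) volume := by
  have hρ0 := h.ρ_nonneg
  have hkin := locallyIntegrableOn_univ.1 h.ρu2_locInt
  rw [Measure.restrict_univ] at hρ0
  simp only [mul_assoc (1 / 2 : ℝ)] at henergy
  obtain ⟨hkinetic, hpotential⟩ := (integrable_add_iff_of_nonneg
    (hkin.aestronglyMeasurable.const_mul (1 / 2))
    (hρ0.mono fun x hx => by simp only [Pi.zero_apply]; positivity)
    (hρ0.mono fun x hx => div_nonneg (Real.rpow_nonneg hx γ) (by linarith))).1 henergy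
  refine ⟨(hkinetic.const_mul 2).congr (ae_of_all _ fun x => by ring),
    (hpotential.const_mul (γ - 1)).congr (ae_of_all _ fun x => ?_)⟩
  exact mul_div_cancel₀ _ (by linarith)

lemma isFiniteEnergyFlow (h : WeakSolution univ μ η (fun s => s ^ γ) G dG ρ u du)
    (hG : MemD01q univ G dG (6 * γ / (5 * γ - 6))) (hγ : 1 < γ) (henergy : Integrable
      (fun x => (1 / 2) * ρ x * (∑ i, (u x i) ^ 2) + ρ x ^ γ / (γ - 1)) volume) :
    IsFiniteEnergyFlow μ η γ (fun x => max (ρ x) 0) (fun i x => u x i) (fun i j x => du x i j)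
      fun i x => dG x i := by
  obtain ⟨hkinetic, hpressure⟩ := h.integrable_of_finite_energy hγ henergy
  have hρ0 := h.ρ_nonneg
  rw [Measure.restrict_univ] at hρ0
  have hmax : ∀ᵐ x ∂volume, ρ x = max (ρ x) 0 := hρ0.mono fun x hx => (max_eq_left hx).symm
  refine ⟨fun x => le_max_right _ _, hpressure.congr ?_, hkinetic.congr ?_, h.u_D012.memD01,
    h.isSolenoidal.congr_ae fun i => ?_, hG.exists_tendstoLp_grad, fun φ hφ => ?_⟩
  · exact hmax.mono fun x hx => by simp only [← hx]
  · exact hmax.mono fun x hx => by simp only [← hx]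
  · exact hmax.mono fun x hx => by simp only [← hx]
  · have hmom := h.momentum _ (isTestVec_one_of_isTest hφ)
    simp only [Measure.restrict_univ] at hmom
    refine (integral_congr_ae ?_).trans (hmom.trans (congrArg₂ _ rfl (integral_congr_ae ?_)))
    · exact hmax.mono fun x hx => by simp only [← hx, tgrad]
    · exact hmax.mono fun x hx => by simp only [← hx]

end WeakSolution

/-- **Theorem 6.** Let `(ρ, u)` be a weak solution of the stationary isentropic system on `ℝ³`
with `γ ≥ 6` and `G ∈ D₀^{1, 6γ/(5γ−6)}(ℝ³)`. If the total energy
`∫_{ℝ³} ((1/2) ρ|u|² + ρ^γ/(γ−1))` is finite, then `u = 0` a.e. -/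
theorem liouville_isentropic_finite_energy
    (μ η γ : ℝ) (hμ : 0 < μ) (hη : 0 ≤ η) (hγ : 6 ≤ γ)
    (G : E3 → ℝ) (dG : E3 → Fin 3 → ℝ)
    (ρ : E3 → ℝ) (u : E3 → Fin 3 → ℝ) (du : E3 → Fin 3 → Fin 3 → ℝ)
    (hG : MemD01q univ G dG (6 * γ / (5 * γ - 6)))
    (hsol : IsentropicWeakSolution μ η γ G dG ρ u du)
    (henergy : Integrable
      (fun x => (1 / 2) * ρ x * (∑ i, (u x i) ^ 2) + ρ x ^ γ / (γ - 1)) volume) :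
    ∀ᵐ x, u x = 0 := by
  have hflow := WeakSolution.isFiniteEnergyFlow hsol hG (by linarith) henergy
  filter_upwards [ae_all_iff.2 (hflow.velocity_ae_eq_zero hμ hη hγ)] with x hx
  exact funext hx
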